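/- For every edge uw of the constrained half-θ₆-graph with w in a negative cone of u, the graph G₉ contains a path from u to w of length at most 3·|uw|. Consequently G₉ is a 3-spanner of the constrained half-θ₆-graph and a 6-spanner of the visibility graph Vis(P,S). -/

import Mathlib

/-!
The spanning ratios are proved in the triangular coordinates of the three pairs of cones: with
`A` and `B` the coordinates of `w - u` for the cone `Cₖ`, the point `w` lies in that cone of `u`
exactly when `A` and `B` are positive, the projection onto the bisector is proportional to
`A + B`, and `|uw|² = A² + A * B + B²`.

A single geometric fact about constraints is used throughout (`Setting.exists_cut`). If `ab` and
`ac` are visibility edges and no constraint at `a` enters the angle `bac`, then `b` sees the next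
vertex `x` of the convex chain from `b` to `c` that bounds the points of `P` in the triangle
`abc`, and no constraint enters the region between `a` and the line `bx`.

*`G₉` and the half-θ₆-graph.* If two canonical vertices of one negative subcone of `u` were such
that `w` lies in the positive cone of `v`, the vertex `x` of the chain next to `v` in the
triangle `uvw` would be closer to `v` than `u`, although `v` chose the edge `vu` (`slope_aux`).
Hence canonical paths are monotone in the horizontal coordinate, and this coordinate bounds their
lengths (`canon_path`). For a canonical vertex `w` of `u`, take the lowest `y` among the canonical
vertices for which every constraint of `u` between `w` and `y` leads to a canonical vertex. Then
`y` is closest in its own subcone, the canonical paths link `y` to `w`, and the edge `uy` together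
with that path has length at most `3 * |uw|` (`G9_neg`).

*The half-θ₆-graph and the visibility graph.* For a visibility edge `uw` with `w` in the positive
cone `Cₖ` of `u`, there is a path of length at most `max (2 * A + B) (A + 2 * B) ≤ 2 * |uw|`; if
no visible vertex of the subcone is both to the right of `uw` and lower than `w` (`REmp`), the
bound improves to `2 * A + B`. Both bounds are proved together by induction on `A + B` (`H_bounds`).
Let `v₀` be the vertex at which the edge of `u` in the subcone of `w` ends, to the left of `uw`,
say. From `v₀`, follow the convex chain of visibility edges to `w` and apply the induction
hypothesis to each of its edges (`chain`). On a descending edge, seen from its other end, the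
relevant part of the cone is empty (`remp_one`); on an ascending one it is empty as soon as that of
`uw` is (`remp_two`). Otherwise each steep edge `vx` may cost the additional amount by which its
second coordinate exceeds the first. By convexity, the edges after a steep one keep `w` to the left
of their lines, so these amounts sum to at most `max 0 (B - A)`.
-/

open Real Set

noncomputable section

namespace CHT6

/-- Points in the plane. -/
abbrev Pt := ℝ × ℝ

/-- Euclidean distance. -/
def dst (p q : Pt) : ℝ := Real.sqrt ((p.1 - q.1) ^ 2 + (p.2 - q.2) ^ 2)

/-- Unsigned angle at `q` between segments `qp` and `qr`. -/
def ang (p q r : Pt) : ℝ :=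
  Real.arccos (((p.1 - q.1) * (r.1 - q.1) + (p.2 - q.2) * (r.2 - q.2)) / (dst p q * dst r q))

/-- 2D cross product. -/
def crossP (a b : Pt) : ℝ := a.1 * b.2 - a.2 * b.1

/-- The segments `ab` and `cd` properly cross: their relative interiors meet. -/
def PCross (a b c d : Pt) : Prop := (openSegment ℝ a b ∩ openSegment ℝ c d).Nonempty

/-- `uz` is a constraint of `S`. -/
def Constr (S : Set (Pt × Pt)) (u z : Pt) : Prop := (u, z) ∈ S ∨ (z, u) ∈ S

/-- `u` and `v` see each other: `uv` is a constraint or no constraint properly crosses it. -/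
def CanSee (S : Set (Pt × Pt)) (u v : Pt) : Prop :=
  Constr S u v ∨ ∀ c ∈ S, ¬ PCross c.1 c.2 u v

/-- Rotation of the plane by angle `θ` about the origin. -/
def rot (θ : ℝ) (p : Pt) : Pt :=
  (Real.cos θ * p.1 - Real.sin θ * p.2, Real.sin θ * p.1 + Real.cos θ * p.2)

/-- `p` relative to `u`, rotated so that the positive cone `Cᵢ` becomes the upward cone. -/
def rel (i : ℕ) (u p : Pt) : Pt := rot (-(2 * Real.pi * i / 3)) (p - u)

/-- `p` lies in the (open) positive cone `Cᵢ` of `u` (width π/3; `C₀` is upward vertical). -/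
def inPos (i : ℕ) (u p : Pt) : Prop := Real.sqrt 3 * |(rel i u p).1| < (rel i u p).2

/-- `p` lies in the negative cone `C̄ᵢ` of `u`. -/
def inNeg (i : ℕ) (u p : Pt) : Prop := inPos i p u

/-- Length of the projection of `p` onto the bisector of the positive cone `Cᵢ` of `u`. -/
def projLen (i : ℕ) (u p : Pt) : ℝ := (rel i u p).2

/-- Projected distance of `p` from `u` for the negative cone `C̄ᵢ` of `u`. -/
def negProj (i : ℕ) (u p : Pt) : ℝ := projLen i p u

/-- `p` and `q` are not strictly separated, within the cone `cone` at `u`, by a constraint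
incident to `u`: they lie in a common (closed) subcone. -/
def SameSubIn (cone : Pt → Pt → Prop) (S : Set (Pt × Pt)) (u p q : Pt) : Prop :=
  ∀ z, Constr S u z → cone u z →
    ¬ (crossP (z - u) (p - u) * crossP (z - u) (q - u) < 0)

def SameSubPos (S : Set (Pt × Pt)) (i : ℕ) (u p q : Pt) : Prop := SameSubIn (inPos i) S u p q

def SameSubNeg (S : Set (Pt × Pt)) (i : ℕ) (u p q : Pt) : Prop := SameSubIn (inNeg i) S u p q

/-- General position: no two points of `P` define a line parallel to one of the six cone rays
(slopes `0`, `√3`, `-√3`), and no three points of `P` are collinear. -/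
def GenPos (P : Set Pt) : Prop :=
  (∀ p ∈ P, ∀ q ∈ P, p ≠ q →
    p.2 ≠ q.2 ∧ q.2 - p.2 ≠ Real.sqrt 3 * (q.1 - p.1) ∧
      q.2 - p.2 ≠ -(Real.sqrt 3 * (q.1 - p.1))) ∧
  (∀ p ∈ P, ∀ q ∈ P, ∀ r ∈ P, p ≠ q → q ≠ r → p ≠ r → ¬ Collinear ℝ ({p, q, r} : Set Pt))

/-- `v` is, among the vertices visible from `u` in the positive subcone of `u` containing `v`,
the one minimizing the projection onto the cone bisector: `u` adds the edge `uv`. -/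
def EdgeDir (P : Set Pt) (S : Set (Pt × Pt)) (u v : Pt) : Prop :=
  u ∈ P ∧ v ∈ P ∧ ∃ i < 3, inPos i u v ∧ CanSee S u v ∧
    ∀ w ∈ P, w ≠ u → inPos i u w → CanSee S u w → SameSubPos S i u v w →
      projLen i u v ≤ projLen i u w

/-- Edges of the constrained half-θ₆-graph. -/
def HEdge (P : Set Pt) (S : Set (Pt × Pt)) (u v : Pt) : Prop :=
  EdgeDir P S u v ∨ EdgeDir P S v u

/-- `f` is a path in the graph with edge relation `E`. -/
def IsPath (E : Pt → Pt → Prop) {n : ℕ} (f : Fin (n + 1) → Pt) : Prop :=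
  ∀ j : Fin n, E (f j.castSucc) (f j.succ)

/-- Euclidean length of a polygonal path. -/
def pathLen {n : ℕ} (f : Fin (n + 1) → Pt) : ℝ :=
  ∑ j : Fin n, dst (f j.castSucc) (f j.succ)

/-- `x` is a vertex of the canonical sequence of `u` in the negative cone `C̄ᵘᵢ`. -/
def CanonVert (P : Set Pt) (S : Set (Pt × Pt)) (i : ℕ) (u x : Pt) : Prop :=
  x ∈ P ∧ HEdge P S u x ∧ inNeg i u x

/-- `v` and `w` are consecutive (in counterclockwise order) vertices of the canonical path of
`u` in a subcone of the negative cone `C̄ᵘᵢ`. -/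
def ConsecCanon (P : Set Pt) (S : Set (Pt × Pt)) (i : ℕ) (u v w : Pt) : Prop :=
  CanonVert P S i u v ∧ CanonVert P S i u w ∧ SameSubNeg S i u v w ∧
  crossP (v - u) (w - u) > 0 ∧
  ∀ x ∈ P, CanonVert P S i u x → SameSubNeg S i u v x →
    ¬ (crossP (v - u) (x - u) > 0 ∧ crossP (x - u) (w - u) > 0)

/-- `x` is a closest canonical vertex of `u` in (a subcone of) the negative cone `C̄ᵘᵢ`,
distances being measured by projection onto the cone bisector. -/
def ClosestCanon (P : Set Pt) (S : Set (Pt × Pt)) (i : ℕ) (u x : Pt) : Prop :=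
  CanonVert P S i u x ∧
  ∀ y ∈ P, CanonVert P S i u y → SameSubNeg S i u x y → negProj i u x ≤ negProj i u y

/-- Edges of the bounded-degree graph `G₉`: canonical-path edges together with, for each
negative subcone, the edge to the closest canonical vertex. -/
def G9Edge (P : Set Pt) (S : Set (Pt × Pt)) (a b : Pt) : Prop :=
  (∃ u ∈ P, ∃ i < 3, ConsecCanon P S i u a b ∨ ConsecCanon P S i u b a) ∨
  (∃ i < 3, ClosestCanon P S i a b ∨ ClosestCanon P S i b a)

/-- Coordinate of `p` along the right boundary direction `(1/2, √3/2)` of the upward cone. -/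
def coordA (p : Pt) : ℝ := p.1 + p.2 / Real.sqrt 3

/-- Coordinate of `p` along the left boundary direction `(-1/2, √3/2)` of the upward cone. -/
def coordB (p : Pt) : ℝ := -p.1 + p.2 / Real.sqrt 3

end CHT6

namespace CHT6

/-! ### Walks with a length bound -/

/-- `Conn E u w L`: the relation `E` admits a walk from `u` to `w` of Euclidean length at
most `L`. -/
inductive Conn (E : Pt → Pt → Prop) : Pt → Pt → ℝ → Prop
  | nil (u : Pt) (L : ℝ) (h : 0 ≤ L) : Conn E u u L
  | cons (u v w : Pt) (K L : ℝ) (h : E u v) (t : Conn E v w K) (hL : dst u v + K ≤ L) :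
      Conn E u w L

theorem dst_nonneg (p q : Pt) : 0 ≤ dst p q := Real.sqrt_nonneg _

theorem dst_comm (p q : Pt) : dst p q = dst q p := by
  unfold dst; congr 1; ring

theorem Conn.mono {E : Pt → Pt → Prop} {u w : Pt} {K L : ℝ} (h : Conn E u w K) (hKL : K ≤ L) :
    Conn E u w L := by
  cases h with
  | nil _ _ h => exact .nil _ _ (h.trans hKL)
  | cons _ v _ M _ h t hL => exact .cons _ v _ M _ h t (hL.trans hKL)

theorem Conn.edge {E : Pt → Pt → Prop} {u w : Pt} (h : E u w) : Conn E u w (dst u w) :=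
  .cons _ w _ 0 _ h (.nil _ _ le_rfl) (by simp)

theorem Conn.trans {E : Pt → Pt → Prop} {u v w : Pt} {K L : ℝ} (h : Conn E u v K)
    (h' : Conn E v w L) : Conn E u w (K + L) := by
  induction h with
  | nil u K hK => exact h'.mono (by linarith)
  | cons u x v M K h t hL ih => exact .cons _ x _ (M + L) _ h (ih h') (by linarith)

theorem Conn.symm {E : Pt → Pt → Prop} (hE : ∀ a b, E a b → E b a) {u w : Pt} {L : ℝ}
    (h : Conn E u w L) : Conn E w u L := by
  induction h with
  | nil u K hK => exact .nil _ _ hK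
  | cons u x v M K h t hL ih =>
    refine (ih.trans (Conn.edge (hE _ _ h))).mono ?_
    rw [dst_comm]; linarith

theorem Conn.toPath {E : Pt → Pt → Prop} {u w : Pt} {L : ℝ} (h : Conn E u w L) :
    ∃ (n : ℕ) (f : Fin (n + 1) → Pt),
      IsPath E f ∧ f 0 = u ∧ f (Fin.last n) = w ∧ pathLen f ≤ L := by
  induction h with
  | nil u K hK => exact ⟨0, fun _ => u, fun j => j.elim0, rfl, rfl, by simpa [pathLen] using hK⟩
  | cons u x v M K h t hL ih =>
    obtain ⟨n, f, hf, h0, hl, hlen⟩ := ih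
    refine ⟨n + 1, Fin.cons u f, ?_, by simp, ?_, ?_⟩
    · intro j
      refine Fin.cases ?_ (fun j => ?_) j
      · simpa [h0] using h
      · have := hf j
        rw [← Fin.succ_castSucc]
        simpa using this
    · rw [← Fin.succ_last]; simpa using hl
    · have : pathLen (Fin.cons u f : Fin (n + 1 + 1) → Pt) = dst u x + pathLen f := by
        unfold pathLen
        rw [Fin.sum_univ_succ]
        congr 1
        simp [h0]
      rw [this]; linarith

/-- Replacing every edge of a path by a walk of stretch at most `c` gives a walk of stretch at
most `c`. -/
theorem Conn.ofPath {E F : Pt → Pt → Prop} {c : ℝ}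
    (hEF : ∀ a b, E a b → Conn F a b (c * dst a b)) :
    ∀ (n : ℕ) (f : Fin (n + 1) → Pt), IsPath E f →
      Conn F (f 0) (f (Fin.last n)) (c * pathLen f) := by
  intro n
  induction n with
  | zero => intro f _; exact .nil _ _ (by simp [pathLen])
  | succ n ih =>
    intro f hf
    have h1 := ih (fun j => f j.succ) (fun j => by
      have := hf j.succ
      rwa [← Fin.succ_castSucc] at this)
    have h2 := hEF _ _ (hf 0)
    have h3 : pathLen f = dst (f 0) (f 1) + pathLen (fun j : Fin (n + 1) => f j.succ) := by
      unfold pathLen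
      rw [Fin.sum_univ_succ]
      rfl
    have h4 := h2.trans h1
    rw [h3, mul_add]
    exact h4

/-- Strong induction on the value of a real key over a finite set. -/
theorem finite_key_induction {α : Type*} {s : Set α} (hs : s.Finite) (key : α → ℝ)
    (Q : α → Prop) (step : ∀ v ∈ s, (∀ z ∈ s, key z < key v → Q z) → Q v) :
    ∀ v ∈ s, Q v := by
  classical
  have main : ∀ n : ℕ, ∀ v ∈ s, (hs.toFinset.filter (fun z => key z < key v)).card ≤ n → Q v := by
    intro n
    induction n with
    | zero =>
      intro v hv hc
      refine step v hv fun z hz hzv => ?_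
      have : z ∈ hs.toFinset.filter (fun z => key z < key v) := by simp [hz, hzv]
      rw [Finset.card_eq_zero.mp (Nat.le_zero.mp hc)] at this
      simp at this
    | succ n ih =>
      intro v hv hc
      refine step v hv fun z hz hzv => ih z hz ?_
      have hlt : (hs.toFinset.filter (fun y => key y < key z)).card <
          (hs.toFinset.filter (fun y => key y < key v)).card := by
        refine Finset.card_lt_card ⟨fun y hy => ?_, fun hsub => ?_⟩
        · simp only [Finset.mem_filter] at hy ⊢
          exact ⟨hy.1, hy.2.trans hzv⟩
        · have := hsub (show z ∈ _ by simp [hz, hzv])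
          simp at this
      omega
  exact fun v hv => main _ v hv le_rfl

/-! ### Orientation -/

/-- Signed area of the triangle `abc`, scaled by `s`. A negative `s` reverses the orientation,
so that mirror images are covered by the same statements. -/
def cr (s : ℝ) (a b c : Pt) : ℝ := s * crossP (b - a) (c - a)

theorem cr_rot (s : ℝ) (a b c : Pt) : cr s a b c = cr s b c a := by
  simp only [cr, crossP, Prod.fst_sub, Prod.snd_sub]; ring

theorem cr_swap (s : ℝ) (a b c : Pt) : cr s a c b = -cr s a b c := by
  simp only [cr, crossP, Prod.fst_sub, Prod.snd_sub]; ring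

theorem cr_swap' (s : ℝ) (a b c : Pt) : cr s b a c = -cr s a b c := by
  simp only [cr, crossP, Prod.fst_sub, Prod.snd_sub]; ring

@[simp] theorem cr_self₁ (s : ℝ) (a b : Pt) : cr s a a b = 0 := by
  simp [cr, crossP]

@[simp] theorem cr_self₂ (s : ℝ) (a b : Pt) : cr s a b a = 0 := by
  simp [cr, crossP]

@[simp] theorem cr_self₃ (s : ℝ) (a b : Pt) : cr s a b b = 0 := by
  simp only [cr, crossP, mul_comm, sub_self, mul_zero]

/-- Barycentric expansion of the affine function `cr s p q` with respect to the triangle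
`abc`. -/
theorem cr_bary (s : ℝ) (a b c p q z : Pt) :
    cr s p q z * cr s a b c =
      cr s b c z * cr s p q a + cr s a z c * cr s p q b + cr s a b z * cr s p q c := by
  simp only [cr, crossP, Prod.fst_sub, Prod.snd_sub]; ring

theorem cr_comb (s : ℝ) (a b p q : Pt) {x y : ℝ} (h : x + y = 1) :
    cr s a b (x • p + y • q) = x * cr s a b p + y * cr s a b q := by
  obtain rfl : x = 1 - y := by linarith
  simp only [cr, crossP, Prod.fst_sub, Prod.snd_sub, Prod.fst_add, Prod.snd_add, Prod.smul_fst,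
    Prod.smul_snd, smul_eq_mul]; ring

theorem cr_comb' (s : ℝ) (a b p q : Pt) {x y : ℝ} (h : x + y = 1) :
    cr s a (x • p + y • q) b = x * cr s a p b + y * cr s a q b := by
  rw [cr_swap, cr_comb s a b p q h, cr_swap s a b p, cr_swap s a b q]; ring

/-- The standing hypotheses of the theorem: the constraints join points of `P`, they do not
cross, and `P` is in general position. -/
structure Setting (P : Set Pt) (S : Set (Pt × Pt)) : Prop where
  fin : P.Finite
  sp : ∀ c ∈ S, c.1 ∈ P ∧ c.2 ∈ P
  nc : ∀ c ∈ S, ∀ d ∈ S, c ≠ d → ¬ PCross c.1 c.2 d.1 d.2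
  gp : GenPos P

theorem collinear_of_crossP {a b c : Pt} (hab : a ≠ b) (h : crossP (b - a) (c - a) = 0) :
    Collinear ℝ ({a, b, c} : Set Pt) := by
  rw [collinear_iff_of_mem (p₀ := a) (by simp)]
  simp only [crossP, Prod.fst_sub, Prod.snd_sub] at h
  have key : ∃ r : ℝ, c = r • (b - a) +ᵥ a := by
    by_cases h1 : b.1 - a.1 = 0
    · have h2 : b.2 - a.2 ≠ 0 := by
        intro h2
        exact hab (Prod.ext (by linarith) (by linarith))
      refine ⟨(c.2 - a.2) / (b.2 - a.2), Prod.ext ?_ ?_⟩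
      · simp only [vadd_eq_add, Prod.fst_add, Prod.smul_fst, Prod.fst_sub, smul_eq_mul, h1]
        rw [h1] at h
        have : c.1 - a.1 = 0 := by
          have : (b.2 - a.2) * (c.1 - a.1) = 0 := by linarith
          exact (mul_eq_zero.mp this).resolve_left h2
        linarith
      · simp only [vadd_eq_add, Prod.snd_add, Prod.smul_snd, Prod.snd_sub, smul_eq_mul]
        rw [div_mul_cancel₀ _ h2]; ring
    · refine ⟨(c.1 - a.1) / (b.1 - a.1), Prod.ext ?_ ?_⟩
      · simp only [vadd_eq_add, Prod.fst_add, Prod.smul_fst, Prod.fst_sub, smul_eq_mul]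
        rw [div_mul_cancel₀ _ h1]; ring
      · simp only [vadd_eq_add, Prod.snd_add, Prod.smul_snd, Prod.snd_sub, smul_eq_mul]
        field_simp
        linarith
  refine ⟨b - a, ?_⟩
  rintro p (rfl | rfl | rfl)
  · exact ⟨0, by simp⟩
  · exact ⟨1, by simp⟩
  · exact key

theorem Constr.symm {S : Set (Pt × Pt)} {a b : Pt} (h : Constr S a b) : Constr S b a := Or.symm h

theorem CanSee.symm {S : Set (Pt × Pt)} {a b : Pt} (h : CanSee S a b) : CanSee S b a := by
  rcases h with h | h
  · exact .inl h.symm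
  · refine .inr fun c hc hX => h c hc ?_
    unfold PCross at hX ⊢
    rwa [openSegment_symm ℝ a b]

section

variable {P : Set Pt} {S : Set (Pt × Pt)} {s : ℝ}

theorem Setting.cr_ne (H : Setting P S) (hs : s ≠ 0) {a b c : Pt} (ha : a ∈ P) (hb : b ∈ P)
    (hc : c ∈ P) (hab : a ≠ b) (hbc : b ≠ c) (hac : a ≠ c) : cr s a b c ≠ 0 := by
  intro h
  refine H.gp.2 a ha b hb c hc hab hbc hac (collinear_of_crossP hab ?_)
  exact (mul_eq_zero.mp h).resolve_left hs

theorem Setting.mem (H : Setting P S) {a b : Pt} (h : Constr S a b) : a ∈ P ∧ b ∈ P := by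
  rcases h with h | h
  · exact H.sp _ h
  · exact (H.sp _ h).symm

/-- A constraint meeting the relative interior of a visibility edge is that edge. -/
theorem Setting.eq_of_meet (H : Setting P S) {a b e e' r : Pt} (hab : CanSee S a b)
    (he : Constr S e e') (hr : r ∈ openSegment ℝ a b) (hr' : r ∈ openSegment ℝ e e') :
    (e = a ∧ e' = b) ∨ (e = b ∧ e' = a) := by
  have swap : ∀ {p q : Pt}, r ∈ openSegment ℝ p q → r ∈ openSegment ℝ q p := by
    intro p q h; rwa [openSegment_symm]
  have key : ∀ {e e' : Pt}, (e, e') ∈ S → r ∈ openSegment ℝ e e' →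
      (e = a ∧ e' = b) ∨ (e = b ∧ e' = a) := by
    intro e e' he hr'
    rcases hab with (h | h) | h
    · by_contra hne
      refine H.nc _ he _ h (fun h => hne ?_) ⟨r, hr', hr⟩
      rw [Prod.mk.injEq] at h
      exact .inl h
    · by_contra hne
      refine H.nc _ he _ h (fun h => hne ?_) ⟨r, hr', swap hr⟩
      rw [Prod.mk.injEq] at h
      exact .inr h
    · exact absurd ⟨r, hr', hr⟩ (h _ he)
  rcases he with he | he
  · exact key he hr'
  · rcases key he (swap hr') with h | h
    · exact .inr h.symm
    · exact .inl h.symm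

/-- A constraint `ee'` cannot leave the line `ab` at a point of the half-open visibility edge
from `a` (included) to `b`. -/
theorem Setting.no_exit (H : Setting P S) (hs : s ≠ 0) {a b e e' q r : Pt} {ρ : ℝ}
    (ha : a ∈ P)
    (hab : CanSee S a b) (he : Constr S e e') (hq : q ∈ openSegment ℝ e e')
    (hr : r ∈ openSegment ℝ e e') (hqn : cr s a b q ≠ 0) (h0 : 0 ≤ ρ) (h1 : ρ < 1)
    (hρ : r = (1 - ρ) • a + ρ • b) (hea : e ≠ a) (hea' : e' ≠ a) : False := by
  rcases h0.eq_or_lt with rfl | h0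
  · obtain rfl : r = a := by simpa using hρ
    have hm := H.mem he
    obtain ⟨x, y, hx, hy, hxy, hr⟩ := hr
    by_cases hee : e = e'
    · subst hee
      apply hea
      rw [← hr, ← add_smul, hxy, one_smul]
    · refine H.cr_ne hs hm.1 hm.2 ha hee hea' hea ?_
      rw [← hr, cr_comb s e e' e e' hxy]; simp
  · have hr2 : r ∈ openSegment ℝ a b := ⟨1 - ρ, ρ, by linarith, h0, by ring, hρ.symm⟩
    obtain ⟨x, y, hx, hy, hxy, rfl⟩ := hq
    apply hqn
    rcases H.eq_of_meet hab he hr2 hr with ⟨rfl, rfl⟩ | ⟨rfl, rfl⟩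
    · exact absurd rfl hea
    · exact absurd rfl hea'

end

end CHT6

namespace CHT6

/-! ### Cutting a triangle by visibility edges -/

section

variable {P : Set Pt} {S : Set (Pt × Pt)} {s : ℝ}

theorem bary_point {a b c r : Pt} (hD : 0 < cr s a b c) :
    r = (cr s b c r / cr s a b c) • a + (cr s a r c / cr s a b c) • b +
      (cr s a b r / cr s a b c) • c := by
  have h := hD.ne'
  refine Prod.ext ?_ ?_
  · simp only [Prod.fst_add, Prod.smul_fst, smul_eq_mul]
    rw [div_mul_eq_mul_div, div_mul_eq_mul_div, div_mul_eq_mul_div, ← add_div, ← add_div,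
      eq_div_iff h]
    simp only [cr, crossP, Prod.fst_sub, Prod.snd_sub]; ring
  · simp only [Prod.snd_add, Prod.smul_snd, smul_eq_mul]
    rw [div_mul_eq_mul_div, div_mul_eq_mul_div, div_mul_eq_mul_div, ← add_div, ← add_div,
      eq_div_iff h]
    simp only [cr, crossP, Prod.fst_sub, Prod.snd_sub]; ring

theorem bary_sum (s : ℝ) (a b c r : Pt) :
    cr s b c r + cr s a r c + cr s a b r = cr s a b c := by
  simp only [cr, crossP, Prod.fst_sub, Prod.snd_sub]; ring

theorem cut_eq (s : ℝ) (a b c x z : Pt) :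
    cr s b x z * cr s a b c = cr s b c z * cr s a b x - cr s a b z * cr s b c x := by
  simp only [cr, crossP, Prod.fst_sub, Prod.snd_sub]; ring

/-- The part of the triangle `abc` cut off by the line `bx`, on the side of `a`, contains no
point of `P` but `a`; then no constraint enters it, since it would have to leave through one of
the visibility edges `ab` and `ac`, or end at `a`. -/
theorem Setting.no_cross (H : Setting P S) (hs : s ≠ 0) {a b c x : Pt} (ha : a ∈ P)
    (hD : 0 < cr s a b c) (hab : CanSee S a b) (hac : CanSee S a c)
    (nosep : ∀ z, Constr S a z → ¬ (0 < cr s a b z ∧ 0 < cr s a z c))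
    (hx1 : 0 < cr s a b x) (hx3 : 0 ≤ cr s b c x)
    (emp : ∀ z ∈ P, z ≠ a → 0 ≤ cr s a b z → 0 ≤ cr s a z c → 0 ≤ cr s b c z →
      cr s b x z ≤ 0)
    {e e' q : Pt} (he : Constr S e e') (hq : q ∈ openSegment ℝ e e') (hq1 : 0 < cr s a b q)
    (hq2 : 0 < cr s a q c) (hq3 : 0 ≤ cr s b x q) (he3 : 0 < cr s b x e) : False := by
  have hm := H.mem he
  have hqs := hq
  obtain ⟨y, y', hy, hy', hyy, hqe⟩ := hq
  have qa : cr s a b q = y * cr s a b e + y' * cr s a b e' := by rw [← hqe, cr_comb _ _ _ _ _ hyy]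
  have qb : cr s a q c = y * cr s a e c + y' * cr s a e' c := by
    rw [← hqe, cr_comb' _ _ _ _ _ hyy]
  have hea : e ≠ a := by
    rintro rfl
    refine nosep e' he ⟨?_, ?_⟩
    · rw [cr_self₂] at qa; by_contra hn; nlinarith
    · rw [cr_self₁] at qb; by_contra hn; nlinarith
  have hea' : e' ≠ a := by
    rintro rfl
    refine nosep e he.symm ⟨?_, ?_⟩
    · rw [cr_self₂] at qa; by_contra hn; nlinarith
    · rw [cr_self₁] at qb; by_contra hn; nlinarith
  -- the point of `[q, e)` at parameter `t`
  have seg : ∀ t : ℝ, 0 < t → t < 1 → ((1 - t) • q + t • e) ∈ openSegment ℝ e e' := by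
    intro t h0 h1
    refine ⟨(1 - t) * y + t, (1 - t) * y', by nlinarith, by nlinarith, by nlinarith, ?_⟩
    rw [← hqe]; module
  have pos : ∀ t : ℝ, 0 < t → t < 1 → 0 < cr s b x ((1 - t) • q + t • e) := by
    intro t h0 h1
    rw [cr_comb _ _ _ _ _ (by ring)]
    have := mul_nonneg (sub_nonneg.mpr h1.le) hq3
    have := mul_pos h0 he3
    linarith
  have exit1 : ∀ t : ℝ, 0 < t → t < 1 → cr s a b ((1 - t) • q + t • e) = 0 →
      0 ≤ cr s a ((1 - t) • q + t • e) c → False := by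
    intro t h0 h1 hz hn
    have hp := pos t h0 h1
    have hseg := seg t h0 h1
    set r := (1 - t) • q + t • e with hr
    have h2 := cut_eq s a b c x r
    have h3 := bary_sum s a b c r
    rw [hz] at h2 h3
    have h4 : 0 < cr s b c r := by
      by_contra hneg
      have := mul_pos hp hD
      nlinarith
    have h5 := bary_point (r := r) hD
    rw [hz] at h5
    refine H.no_exit (ρ := cr s a r c / cr s a b c) hs ha hab he hqs hseg hq1.ne'
      (div_nonneg hn hD.le) ?_ ?_ hea hea'
    · rw [div_lt_one hD]; linarith
    · have : 1 - cr s a r c / cr s a b c = cr s b c r / cr s a b c := by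
        field_simp; linarith
      rw [this]; simpa using h5
  have exit2 : ∀ t : ℝ, 0 < t → t < 1 → cr s a ((1 - t) • q + t • e) c = 0 →
      0 ≤ cr s a b ((1 - t) • q + t • e) → False := by
    intro t h0 h1 hz hn
    have hp := pos t h0 h1
    have hseg := seg t h0 h1
    set r := (1 - t) • q + t • e with hr
    have h2 := cut_eq s a b c x r
    have h3 := bary_sum s a b c r
    rw [hz] at h3
    have h4 : 0 < cr s b c r := by
      by_contra hneg
      have := mul_pos hp hD
      have := mul_nonneg hn hx3
      nlinarith
    have h5 := bary_point (r := r) hD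
    rw [hz] at h5
    refine H.no_exit (ρ := cr s a b r / cr s a b c) hs ha hac he hqs hseg
      (by rw [cr_swap]; linarith) (div_nonneg hn hD.le) ?_ ?_ hea hea'
    · rw [div_lt_one hD]; linarith
    · have : 1 - cr s a b r / cr s a b c = cr s b c r / cr s a b c := by
        field_simp; linarith
      rw [this]; simpa using h5
  have lin1 : ∀ t : ℝ, cr s a b ((1 - t) • q + t • e) = (1 - t) * cr s a b q + t * cr s a b e :=
    fun t => cr_comb _ _ _ _ _ (by ring)
  have lin2 : ∀ t : ℝ, cr s a ((1 - t) • q + t • e) c = (1 - t) * cr s a q c + t * cr s a e c :=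
    fun t => cr_comb' _ _ _ _ _ (by ring)
  -- exit parameter for a function falling from `g > 0` to `g' < 0`
  have par : ∀ g g' : ℝ, 0 < g → g' < 0 → 0 < g / (g - g') ∧ g / (g - g') < 1 ∧
      (1 - g / (g - g')) * g + g / (g - g') * g' = 0 := by
    intro g g' h h'
    have hd : 0 < g - g' := by linarith
    refine ⟨div_pos h hd, by rw [div_lt_one hd]; linarith, ?_⟩
    field_simp; ring
  by_cases h1 : cr s a b e < 0
  · obtain ⟨t0, t1, tz⟩ := par _ _ hq1 h1
    set t := cr s a b q / (cr s a b q - cr s a b e)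
    by_cases hn : 0 ≤ cr s a ((1 - t) • q + t • e) c
    · exact exit1 t t0 t1 (by rw [lin1, tz]) hn
    · -- the line `ac` is reached first
      have h2 : cr s a e c < 0 := by
        rw [lin2] at hn; by_contra h2; apply hn
        have := mul_pos (sub_pos.mpr t1) hq2
        have := mul_nonneg t0.le (not_lt.mp h2)
        linarith
      obtain ⟨u0, u1, uz⟩ := par _ _ hq2 h2
      set u := cr s a q c / (cr s a q c - cr s a e c)
      refine exit2 u u0 u1 (by rw [lin2, uz]) ?_
      rw [lin2] at hn
      rw [lin1]
      have hut : u < t := by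
        by_contra hc
        nlinarith
      nlinarith
  · by_cases h2 : cr s a e c < 0
    · obtain ⟨u0, u1, uz⟩ := par _ _ hq2 h2
      set u := cr s a q c / (cr s a q c - cr s a e c)
      refine exit2 u u0 u1 (by rw [lin2, uz]) ?_
      rw [lin1]
      have := mul_pos (sub_pos.mpr u1) hq1
      have := mul_nonneg u0.le (not_lt.mp h1)
      linarith
    · push Not at h1 h2
      have h4 := cut_eq s a b c x e
      have h5 : 0 ≤ cr s b c e := by
        by_contra hneg
        have := mul_pos he3 hD
        have := mul_nonneg h1 hx3
        nlinarith
      exact absurd (emp e hm.1 hea h1 h2 h5) (not_le.mpr he3)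

/-- The vertex `x` follows `b` on the convex hull of the points of `P` in the triangle `abc`
other than `a`, whose sides `ab` and `ac` are visibility edges. -/
structure Cut (P : Set Pt) (S : Set (Pt × Pt)) (s : ℝ) (a b c x : Pt) : Prop where
  mem : x ∈ P
  ne_a : x ≠ a
  ne_b : x ≠ b
  abx : 0 < cr s a b x
  axc : x ≠ c → 0 < cr s a x c
  bcx : 0 ≤ cr s b c x
  see_a : CanSee S a x
  see_b : CanSee S b x
  /-- Points on the side of `a` of the line `bx` lie outside the angle `bac`. -/
  escape : ∀ z ∈ P, z ≠ a → 0 < cr s b x z → cr s a b z < 0 ∨ cr s a z c < 0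
  nocross : ∀ e e' q : Pt, Constr S e e' → q ∈ openSegment ℝ e e' → 0 < cr s a b q →
    0 < cr s a q c → 0 ≤ cr s b x q → 0 < cr s b x e → False
  nosep_b : ∀ z, Constr S b z → ¬ (0 < cr s a b z ∧ 0 < cr s b x z)

theorem exists_small {g g' : ℝ} (hg : 0 < g) : ∃ t : ℝ, 0 < t ∧ t < 1 ∧
    ∀ t', 0 ≤ t' → t' ≤ t → 0 < (1 - t') * g + t' * g' := by
  refine ⟨g / (2 * (g + |g'|)), by positivity, ?_, ?_⟩
  · rw [div_lt_one (by positivity)]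
    have := abs_nonneg g'; linarith
  · intro t' h0 h1
    have hp : 0 < g + |g'| := by positivity
    rw [le_div_iff₀ (by positivity)] at h1
    have h2 := mul_le_mul_of_nonneg_left (neg_abs_le g') h0
    nlinarith

/-- Consecutive hull vertices see each other: the first edge of the convex chain of visibility
edges joining `b` to `c` inside the triangle `abc`. -/
theorem Setting.exists_cut (H : Setting P S) (hs : s ≠ 0) {a b c : Pt} (ha : a ∈ P)
    (hb : b ∈ P) (hc : c ∈ P)
    (hD : 0 < cr s a b c) (hab : CanSee S a b) (hac : CanSee S a c)
    (nosep : ∀ z, Constr S a z → ¬ (0 < cr s a b z ∧ 0 < cr s a z c)) :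
    ∃ x, Cut P S s a b c x := by
  classical
  have nab : a ≠ b := by rintro rfl; simp at hD
  have nac : a ≠ c := by rintro rfl; simp at hD
  have nbc : b ≠ c := by rintro rfl; simp at hD
  let T : Finset Pt := H.fin.toFinset.filter
    (fun z => z ≠ a ∧ 0 < cr s a b z ∧ 0 ≤ cr s a z c ∧ 0 ≤ cr s b c z)
  have hcT : c ∈ T := by simp [T, hc, nac.symm, hD]
  obtain ⟨x, hxT, hmax⟩ := T.exists_max_image (fun z => cr s b c z / cr s a b z) ⟨c, hcT⟩
  simp only [T, Finset.mem_filter, Set.Finite.mem_toFinset] at hxT hmax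
  obtain ⟨hxP, hxa, hx1, hx2, hx3⟩ := hxT
  have hxb : x ≠ b := by rintro rfl; simp at hx1
  have emp : ∀ z ∈ P, z ≠ a → 0 ≤ cr s a b z → 0 ≤ cr s a z c → 0 ≤ cr s b c z →
      cr s b x z ≤ 0 := by
    intro z hz hza h1 h2 h3
    rcases h1.eq_or_lt with h1 | h1
    · by_cases hzb : z = b
      · subst hzb; simp
      · exact absurd h1.symm (H.cr_ne hs ha hb hz nab (Ne.symm hzb) (Ne.symm hza))
    · have := hmax z ⟨hz, hza, h1, h2, h3⟩
      rw [div_le_div_iff₀ h1 hx1] at this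
      have h4 := cut_eq s a b c x z
      by_contra hn
      have := mul_pos (not_le.mp hn) hD
      nlinarith
  have axc : x ≠ c → 0 < cr s a x c := fun h =>
    lt_of_le_of_ne hx2 (H.cr_ne hs ha hxP hc hxa.symm h nac).symm
  have nocross : ∀ e e' q : Pt, Constr S e e' → q ∈ openSegment ℝ e e' → 0 < cr s a b q →
      0 < cr s a q c → 0 ≤ cr s b x q → 0 < cr s b x e → False := by
    intro e e' q he hq h1 h2 h3 h4
    exact H.no_cross hs ha hD hab hac nosep hx1 hx3 emp he hq h1 h2 h3 h4
  have nocross' : ∀ e e' q : Pt, Constr S e e' → q ∈ openSegment ℝ e e' → 0 < cr s a b q →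
      0 < cr s a q c → 0 ≤ cr s b x q → (cr s b x e ≠ 0 ∨ 0 < cr s b x q) → False := by
    intro e e' q he hq h1 h2 h3 h4
    by_cases h5 : 0 < cr s b x e
    · exact nocross e e' q he hq h1 h2 h3 h5
    · refine nocross e' e q he.symm (by rwa [openSegment_symm]) h1 h2 h3 ?_
      obtain ⟨y, y', hy, hy', hyy, rfl⟩ := hq
      rw [cr_comb _ _ _ _ _ hyy] at h3 h4
      by_contra h6
      rcases h4 with h4 | h4
      · have := lt_of_le_of_ne (not_lt.mp h5) h4
        nlinarith
      · nlinarith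
  refine ⟨x, hxP, hxa, hxb, hx1, axc, hx3, ?_, ?_, ?_, nocross, ?_⟩
  · by_cases hxc : x = c
    · exact hxc ▸ hac
    · refine .inr fun d hd ⟨q, hq1, hq2⟩ => ?_
      obtain ⟨y, y', hy, hy', hyy, rfl⟩ := hq2
      have h3 : 0 < cr s b x (y • a + y' • x) := by
        rw [cr_comb _ _ _ _ _ hyy, cr_self₃, ← cr_rot]; nlinarith
      refine nocross' d.1 d.2 _ (.inl hd) hq1 ?_ ?_ h3.le (.inr h3)
      · rw [cr_comb _ _ _ _ _ hyy, cr_self₂]; nlinarith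
      · rw [cr_comb' _ _ _ _ _ hyy, cr_self₁]; have := axc hxc; nlinarith
  · by_cases hbx : Constr S b x
    · exact .inl hbx
    · refine .inr fun d hd ⟨q, hq1, hq2⟩ => ?_
      have hdm := H.sp d hd
      have hline : cr s b x d.1 ≠ 0 ∨ cr s b x d.2 ≠ 0 := by
        by_contra hn
        push Not at hn
        have e1 : d.1 = b ∨ d.1 = x := by
          by_contra h; push Not at h
          exact H.cr_ne hs hb hxP hdm.1 hxb.symm h.2.symm h.1.symm hn.1
        have e2 : d.2 = b ∨ d.2 = x := by
          by_contra h; push Not at h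
          exact H.cr_ne hs hb hxP hdm.2 hxb.symm h.2.symm h.1.symm hn.2
        have deg : ∀ p : Pt, (p = b ∨ p = x) → q ∈ openSegment ℝ p p → False := by
          intro p hp hqp
          rw [openSegment_same, mem_singleton_iff] at hqp
          subst hqp
          rcases hp with rfl | rfl
          · exact hxb (left_mem_openSegment_iff.mp hq2).symm
          · exact hxb (right_mem_openSegment_iff.mp hq2).symm
        rcases e1 with e1 | e1 <;> rcases e2 with e2 | e2
        · rw [e1, e2] at hq1; exact deg _ (.inl rfl) hq1
        · exact hbx (.inl (by rw [← e1, ← e2]; exact hd))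
        · exact hbx (.inr (by rw [← e1, ← e2]; exact hd))
        · rw [e1, e2] at hq1; exact deg _ (.inr rfl) hq1
      obtain ⟨y, y', hy, hy', hyy, rfl⟩ := hq2
      have h1 : 0 < cr s a b (y • b + y' • x) := by
        rw [cr_comb _ _ _ _ _ hyy, cr_self₃]; nlinarith
      have h2 : 0 < cr s a (y • b + y' • x) c := by
        rw [cr_comb' _ _ _ _ _ hyy]; nlinarith
      have h3 : cr s b x (y • b + y' • x) = 0 := by
        rw [cr_comb _ _ _ _ _ hyy]; simp
      rcases hline with h | h
      · exact nocross' d.1 d.2 _ (.inl hd) hq1 h1 h2 h3.ge (.inl h)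
      · exact nocross' d.2 d.1 _ (.inr hd) (by rwa [openSegment_symm]) h1 h2 h3.ge (.inl h)
  · intro z hz hza hf
    by_contra hn
    push Not at hn
    have h4 := cut_eq s a b c x z
    have h5 : 0 ≤ cr s b c z := by
      by_contra hneg
      have := mul_pos hf hD
      have := mul_nonneg hn.1 hx3
      nlinarith
    exact absurd (emp z hz hza hn.1 hn.2 h5) (not_le.mpr hf)
  · rintro z hz ⟨h1, h2⟩
    obtain ⟨t, t0, t1, ht⟩ := exists_small (g := cr s a b c) (g' := cr s a z c) hD
    have h12 : (1 - t) + t = 1 := by ring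
    refine nocross z b ((1 - t) • b + t • z) hz.symm
      ⟨t, 1 - t, t0, by linarith, by ring, by rw [add_comm]⟩ ?_ ?_ ?_ h2
    · rw [cr_comb _ _ _ _ _ h12, cr_self₃]; nlinarith
    · rw [cr_comb' _ _ _ _ _ h12]; exact ht t t0.le le_rfl
    · rw [cr_comb _ _ _ _ _ h12, cr_self₂]; nlinarith

end

end CHT6

namespace CHT6

/-! ### Triangular coordinates -/

/-- The three linear forms, with sum zero, vanishing on the three lines through the origin
parallel to the cone rays. The positive cone `Cₖ` is where the form of index `k` is negative
and the two others are positive. -/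
def tri : ℕ → Pt → ℝ
  | 0, p => -(2 * p.2 / √3)
  | 1, p => coordA p
  | _, p => coordB p

/-- `Fr i j k`: the numbers `i, j, k` are `0, 1, 2` in some order. The forms of index `i`
and `j` are then coordinates adapted to the cone `Cₖ`. -/
inductive Fr : ℕ → ℕ → ℕ → Prop
  | a : Fr 1 2 0
  | b : Fr 2 1 0
  | c : Fr 2 0 1
  | d : Fr 0 2 1
  | e : Fr 0 1 2
  | f : Fr 1 0 2

theorem tri_form (i : ℕ) : ∃ α β : ℝ, ∀ p, tri i p = α * p.1 + β * p.2 := by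
  rcases i with _ | _ | i
  · exact ⟨0, -(2 / √3), fun p => by simp only [tri]; ring⟩
  · exact ⟨1, 1 / √3, fun p => by simp only [tri, coordA]; ring⟩
  · exact ⟨-1, 1 / √3, fun p => by simp only [tri, coordB]; ring⟩

theorem tri_sub (i : ℕ) (p q : Pt) : tri i (p - q) = tri i p - tri i q := by
  obtain ⟨α, β, h⟩ := tri_form i
  simp only [h, Prod.fst_sub, Prod.snd_sub]; ring

theorem tri_comb (s : ℝ) (i : ℕ) (u p q z : Pt) :
    tri i (z - u) * cr s u p q = cr s u z q * tri i (p - u) + cr s u p z * tri i (q - u) := by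
  obtain ⟨α, β, h⟩ := tri_form i
  simp only [h, cr, crossP, Prod.fst_sub, Prod.snd_sub]; ring

namespace Fr

variable {i j k : ℕ}

theorem swap (F : Fr i j k) : Fr j i k := by cases F <;> constructor

theorem rot (F : Fr i j k) : Fr k j i := by cases F <;> constructor

theorem lt (F : Fr i j k) : k < 3 := by cases F <;> omega

theorem sum (F : Fr i j k) (p : Pt) : tri k p = -tri i p - tri j p := by
  cases F <;> simp only [tri, coordA, coordB] <;> ring

theorem rel_zero (u p : Pt) : rel 0 u p = p - u := by
  simp [rel, CHT6.rot]; rfl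

theorem cos_one : Real.cos (-(2 * Real.pi * (1 : ℕ) / 3)) = -(1 / 2) := by
  rw [Real.cos_neg, show 2 * Real.pi * ((1 : ℕ) : ℝ) / 3 = Real.pi - Real.pi / 3 by
    push_cast; ring, Real.cos_pi_sub, Real.cos_pi_div_three]

theorem sin_one : Real.sin (-(2 * Real.pi * (1 : ℕ) / 3)) = -(√3 / 2) := by
  rw [Real.sin_neg, show 2 * Real.pi * ((1 : ℕ) : ℝ) / 3 = Real.pi - Real.pi / 3 by
    push_cast; ring, Real.sin_pi_sub, Real.sin_pi_div_three]

theorem cos_two : Real.cos (-(2 * Real.pi * (2 : ℕ) / 3)) = -(1 / 2) := by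
  rw [Real.cos_neg, show 2 * Real.pi * ((2 : ℕ) : ℝ) / 3 = Real.pi / 3 + Real.pi by
    push_cast; ring, Real.cos_add_pi, Real.cos_pi_div_three]

theorem sin_two : Real.sin (-(2 * Real.pi * (2 : ℕ) / 3)) = √3 / 2 := by
  rw [Real.sin_neg, show 2 * Real.pi * ((2 : ℕ) : ℝ) / 3 = Real.pi / 3 + Real.pi by
    push_cast; ring, Real.sin_add_pi, Real.sin_pi_div_three, neg_neg]

/-- The height and the horizontal coordinate used for the cone `Cₖ`, in terms of the forms
`tri`; the two orders of `i, j` give opposite signs in the second equation. -/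
theorem rel_eq (F : Fr i j k) (u p : Pt) :
    (rel k u p).2 = √3 / 2 * (tri i (p - u) + tri j (p - u)) ∧
    ((rel k u p).1 = (tri i (p - u) - tri j (p - u)) / 2 ∨
      (rel k u p).1 = -((tri i (p - u) - tri j (p - u)) / 2)) := by
  have h3 : √3 ≠ 0 := by positivity
  have hs : √3 ^ 2 = 3 := Real.sq_sqrt (by norm_num)
  have hd : ∀ y : ℝ, y / √3 = √3 * y / 3 := by
    intro y; field_simp; rw [hs]
  cases F
  case a | b =>
    rw [rel_zero]
    refine ⟨?_, ?_⟩
    · simp only [tri, coordA, coordB, hd]; linear_combination (-(p - u).2 / 3) * hs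
    · simp only [tri, coordA, coordB]
      first
      | left; ring1
      | right; ring1
  case c | d =>
    simp only [rel, CHT6.rot, cos_one, sin_one]
    refine ⟨?_, ?_⟩
    · simp only [tri, coordA, coordB, hd]
      linear_combination (p - u).2 / 6 * hs
    · simp only [tri, coordA, coordB, hd]
      first
      | left; ring1
      | right; ring1
  case e | f =>
    simp only [rel, CHT6.rot, cos_two, sin_two]
    refine ⟨?_, ?_⟩
    · simp only [tri, coordA, coordB, hd]
      linear_combination (p - u).2 / 6 * hs
    · simp only [tri, coordA, coordB, hd]
      first
      | left; ring1
      | right; ring1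

theorem proj (F : Fr i j k) (u p : Pt) :
    projLen k u p = √3 / 2 * (tri i (p - u) + tri j (p - u)) := (F.rel_eq u p).1

theorem proj_le (F : Fr i j k) (u p v q : Pt) :
    projLen k u p ≤ projLen k v q ↔
      tri i (p - u) + tri j (p - u) ≤ tri i (q - v) + tri j (q - v) := by
  rw [F.proj, F.proj]
  exact mul_le_mul_iff_right₀ (by positivity)

theorem inPos_iff (F : Fr i j k) (u p : Pt) :
    inPos k u p ↔ 0 < tri i (p - u) ∧ 0 < tri j (p - u) := by
  have h3 : 0 < √3 := by positivity
  obtain ⟨h2, h1⟩ := F.rel_eq u p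
  have key : ∀ x y : ℝ, √3 * |(x - y) / 2| < √3 / 2 * (x + y) ↔ 0 < x ∧ 0 < y := by
    intro x y
    rw [show √3 / 2 * (x + y) = √3 * ((x + y) / 2) by ring, mul_lt_mul_iff_right₀ h3, abs_lt]
    constructor
    · rintro ⟨a, b⟩; constructor <;> linarith
    · rintro ⟨a, b⟩; constructor <;> linarith
  unfold inPos
  rw [h2]
  rcases h1 with h1 | h1
  · rw [h1]; exact key _ _
  · rw [h1, abs_neg]; exact key _ _

theorem exists_cr (F : Fr i j k) : ∃ s : ℝ, s ≠ 0 ∧ ∀ a b c, cr s a b c =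
    tri j (b - a) * tri i (c - a) - tri i (b - a) * tri j (c - a) := by
  have h3 : √3 ≠ 0 := by positivity
  cases F
  case a | c | e =>
    refine ⟨-(2 / √3), neg_ne_zero.mpr (div_ne_zero two_ne_zero h3), fun a b c => ?_⟩
    simp only [cr, crossP, tri, coordA, coordB, Prod.fst_sub, Prod.snd_sub]; ring
  case b | d | f =>
    refine ⟨2 / √3, div_ne_zero two_ne_zero h3, fun a b c => ?_⟩
    simp only [cr, crossP, tri, coordA, coordB, Prod.fst_sub, Prod.snd_sub]; ring

theorem exists_pos {k : ℕ} (hk : k < 3) : ∃ i j, Fr i j k ∧ ∃ s : ℝ, 0 < s ∧ ∀ a b c,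
    cr s a b c = tri j (b - a) * tri i (c - a) - tri i (b - a) * tri j (c - a) := by
  have h3 : 0 < √3 := by positivity
  have hex : ∃ i j, Fr i j k := by
    interval_cases k
    exacts [⟨_, _, .a⟩, ⟨_, _, .c⟩, ⟨_, _, .e⟩]
  obtain ⟨i, j, F⟩ := hex
  obtain ⟨s, hs, h⟩ := F.exists_cr
  rcases hs.lt_or_gt with hs | hs
  · refine ⟨j, i, F.swap, -s, by linarith, fun a b c => ?_⟩
    have := h a b c
    simp only [cr] at this ⊢
    linarith
  · exact ⟨i, j, F, s, hs, h⟩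

theorem dst_eq (F : Fr i j k) (p q : Pt) :
    dst p q = √(tri i (q - p) ^ 2 + tri i (q - p) * tri j (q - p) + tri j (q - p) ^ 2) := by
  have h3 : √3 ≠ 0 := by positivity
  have hs : √3 ^ 2 = 3 := Real.sq_sqrt (by norm_num)
  have hd : ∀ y : ℝ, y / √3 = √3 * y / 3 := by
    intro y; field_simp; rw [hs]
  unfold dst
  congr 1
  cases F <;> simp only [tri, coordA, coordB, Prod.fst_sub, Prod.snd_sub, hd] <;>
    linear_combination (-(q.2 - p.2) ^ 2 / 3) * hs

end Fr

theorem Setting.tri_ne {P : Set Pt} {S : Set (Pt × Pt)} (H : Setting P S) (k : ℕ) {p q : Pt}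
    (hp : p ∈ P) (hq : q ∈ P) (h : p ≠ q) : tri k (q - p) ≠ 0 := by
  have h3 : √3 ≠ 0 := by positivity
  have hs : √3 ^ 2 = 3 := Real.sq_sqrt (by norm_num)
  obtain ⟨h1, h2, h4⟩ := H.gp.1 p hp q hq h
  rcases k with _ | _ | k <;> simp only [tri, coordA, coordB, Prod.fst_sub, Prod.snd_sub] <;>
    intro h0
  · apply h1; field_simp at h0; linarith
  · apply h4; field_simp at h0; linear_combination h0
  · apply h2; field_simp at h0; linear_combination h0

/-- Separation of `p` and `q` at `u` by `z`, in terms of `cr`. -/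
theorem sep_iff {s : ℝ} (hs : s ≠ 0) (u z p q : Pt) :
    crossP (z - u) (p - u) * crossP (z - u) (q - u) < 0 ↔ cr s u z p * cr s u z q < 0 := by
  have h : cr s u z p * cr s u z q =
      s ^ 2 * (crossP (z - u) (p - u) * crossP (z - u) (q - u)) := by
    simp only [cr]; ring
  have h2 : 0 < s ^ 2 := by positivity
  rw [h]
  constructor
  · intro h; exact mul_neg_of_pos_of_neg h2 h
  · intro h; by_contra hn; have := mul_nonneg h2.le (not_lt.mp hn); linarith

end CHT6

namespace CHT6

/-! ### Canonical paths: the stretch of `G₉` relative to the half-θ₆-graph -/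

variable {P : Set Pt} {S : Set (Pt × Pt)} {s : ℝ} {i j k : ℕ}

theorem tri_rev (i : ℕ) (p q : Pt) : tri i (p - q) = -tri i (q - p) := by
  rw [tri_sub, tri_sub]; ring

theorem tri_add (i : ℕ) (p q r : Pt) : tri i (p - r) = tri i (p - q) + tri i (q - r) := by
  rw [tri_sub, tri_sub, tri_sub]; ring

theorem inPos_neg {u p : Pt} (hk : k < 3) (h : inPos k u p) : tri k (p - u) < 0 := by
  obtain ⟨i, j, F, -⟩ := Fr.exists_pos hk
  obtain ⟨h1, h2⟩ := (F.inPos_iff u p).mp h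
  rw [F.sum]; linarith

theorem inPos_pos {m : ℕ} {u p : Pt} (hk : k < 3) (hm : m < 3) (hmk : m ≠ k) (h : inPos k u p) :
    0 < tri m (p - u) := by
  interval_cases k <;> interval_cases m <;> first
    | exact absurd rfl hmk
    | exact ((Fr.a.inPos_iff u p).mp h).1
    | exact ((Fr.a.inPos_iff u p).mp h).2
    | exact ((Fr.c.inPos_iff u p).mp h).1
    | exact ((Fr.c.inPos_iff u p).mp h).2
    | exact ((Fr.e.inPos_iff u p).mp h).1
    | exact ((Fr.e.inPos_iff u p).mp h).2

theorem inPos_unique {k' : ℕ} {u p : Pt} (hk : k < 3) (hk' : k' < 3) (h : inPos k u p)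
    (h' : inPos k' u p) : k = k' := by
  by_contra hne
  have h1 := inPos_neg hk h
  have h2 := inPos_pos hk' hk hne h'
  linarith

theorem inPos_asymm {k' : ℕ} {u p : Pt} (hk : k < 3) (hk' : k' < 3) (h : inPos k u p)
    (h' : inPos k' p u) : False := by
  obtain ⟨m, hm, h1, h2⟩ : ∃ m < 3, m ≠ k ∧ m ≠ k' := by
    interval_cases k <;> interval_cases k' <;> first
      | exact ⟨0, by omega, by omega, by omega⟩
      | exact ⟨1, by omega, by omega, by omega⟩
      | exact ⟨2, by omega, by omega, by omega⟩
  have h3 := inPos_pos hk hm h1 h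
  have h4 := inPos_pos hk' hm h2 h'
  rw [tri_rev] at h4; linarith

/-- The edge from `u` to a canonical vertex `v` was added by `v`, in the cone `Cₖ`. -/
theorem canon_edge {u v : Pt} (hk : k < 3) (h : CanonVert P S k u v) :
    u ∈ P ∧ CanSee S v u ∧ ∀ y ∈ P, y ≠ v → inPos k v y → CanSee S v y → SameSubPos S k v u y →
      projLen k v u ≤ projLen k v y := by
  obtain ⟨-, hE, hn⟩ := h
  rcases hE with ⟨-, -, m, hm, h1, -⟩ | ⟨-, hu, m, hm, h1, h2, h3⟩
  · exact (inPos_asymm hm hk h1 hn).elim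
  · obtain rfl := inPos_unique hm hk h1 hn
    exact ⟨hu, h2, h3⟩

theorem neg_coords (F : Fr i j k) {u v : Pt} (h : inNeg k u v) :
    tri i (v - u) < 0 ∧ tri j (v - u) < 0 := by
  obtain ⟨h1, h2⟩ := (F.inPos_iff v u).mp h
  rw [tri_rev] at h1 h2
  constructor <;> linarith

/-- Of two canonical vertices of one negative subcone, neither lies in the positive cone of the
other: otherwise the visibility edge of `v` that follows `vu` in the triangle `uvw` would be
shorter than the edge `vu` chosen by `v`. -/
theorem slope_aux (H : Setting P S) (F : Fr i j k) (hs : s ≠ 0) {u v w : Pt}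
    (hv : CanonVert P S k u v) (hw : CanonVert P S k u w) (hsub : SameSubNeg S k u v w)
    (hcr : 0 < cr s u v w) (h : inPos k v w) : False := by
  obtain ⟨hu, hvu, hmin⟩ := canon_edge F.lt hv
  obtain ⟨-, hwu, -⟩ := canon_edge F.lt hw
  obtain ⟨hvi, hvj⟩ := neg_coords F hv.2.2
  obtain ⟨hwi, hwj⟩ := neg_coords F hw.2.2
  have nosep : ∀ z, Constr S u z → ¬ (0 < cr s u v z ∧ 0 < cr s u z w) := by
    rintro z hz ⟨h1, h2⟩
    have hneg : inNeg k u z := by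
      refine (F.inPos_iff z u).mpr ⟨?_, ?_⟩
      · rw [tri_rev]
        have := tri_comb s i u v w z
        by_contra hc
        have := mul_nonneg (neg_nonpos.mp (not_lt.mp hc)) hcr.le
        have := mul_neg_of_pos_of_neg h1 hwi
        have := mul_neg_of_pos_of_neg h2 hvi
        linarith
      · rw [tri_rev]
        have := tri_comb s j u v w z
        by_contra hc
        have := mul_nonneg (neg_nonpos.mp (not_lt.mp hc)) hcr.le
        have := mul_neg_of_pos_of_neg h1 hwj
        have := mul_neg_of_pos_of_neg h2 hvj
        linarith
    refine hsub z hz hneg ((sep_iff hs u z v w).mpr ?_)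
    rw [cr_swap]
    nlinarith
  obtain ⟨x, hx⟩ := H.exists_cut hs hu hv.1 hw.1 hcr hvu.symm hwu.symm nosep
  obtain ⟨hwvi, hwvj⟩ := (F.inPos_iff v w).mp h
  obtain ⟨huvi, huvj⟩ := (F.inPos_iff v u).mp hv.2.2
  have hxb := hx.abx
  have hxc := hx.bcx
  have e1 : cr s v w u = cr s u v w := by rw [cr_rot s u v w]
  have e2 : cr s v x u = cr s u v x := by rw [cr_rot s u v x]
  have pos : ∀ m, 0 < tri m (w - v) → 0 < tri m (u - v) → 0 < tri m (x - v) := by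
    intro m h1 h2
    have := tri_comb s m v w u x
    rw [e1, e2] at this
    have h3 := mul_pos hxb h1
    have h4 := mul_nonneg hxc h2.le
    by_contra hc
    have := mul_nonneg (neg_nonneg.mpr (not_lt.mp hc)) hcr.le
    linarith
  have hxi := pos i hwvi huvi
  have hxj := pos j hwvj huvj
  have hss : SameSubPos S k v u x := by
    intro z hz hzp hlt
    rw [sep_iff hs] at hlt
    obtain ⟨hzi, -⟩ := (F.inPos_iff v z).mp hzp
    have e3 : cr s v z u = cr s u v z := by rw [cr_rot s u v z]
    have e4 : cr s v z x = -cr s v x z := by rw [cr_swap]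
    have hno := hx.nosep_b z hz
    have ht := tri_comb s i v x u z
    rw [e3, e2] at ht
    rw [e3, e4] at hlt
    rcases mul_neg_iff.mp hlt with ⟨h1, h2⟩ | ⟨h1, h2⟩
    · exact hno ⟨h1, by linarith⟩
    · have := mul_pos hzi hxb
      have := mul_neg_of_neg_of_pos h1 hxi
      have : cr s v x z * tri i (u - v) < 0 := mul_neg_of_neg_of_pos (by linarith) huvi
      linarith
  have hle := hmin x hx.mem hx.ne_b ((F.inPos_iff v x).mpr ⟨hxi, hxj⟩) hx.see_b hss
  rw [F.proj_le] at hle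
  have hxw : 0 ≤ cr s u x w := by
    by_cases hc : x = w
    · rw [hc]; simp
    · exact (hx.axc hc).le
  have ti := tri_comb s i u v w x
  have tj := tri_comb s j u v w x
  have h1 := mul_neg_of_pos_of_neg hxb (add_neg hwi hwj)
  have h2 := mul_nonpos_of_nonneg_of_nonpos hxw (add_neg hvi hvj).le
  have h3 : 0 ≤ (tri i (x - u) + tri j (x - u)) := by
    rw [tri_add i x u v, tri_add j x u v] at hle; linarith
  have := mul_nonneg h3 hcr.le
  linarith

theorem slope (H : Setting P S) (F : Fr i j k) (hs : s ≠ 0)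
    (hF : ∀ a b c, cr s a b c =
      tri j (b - a) * tri i (c - a) - tri i (b - a) * tri j (c - a)) {u v w : Pt}
    (hv : CanonVert P S k u v) (hw : CanonVert P S k u w) (hsub : SameSubNeg S k u v w)
    (hcr : 0 < cr s u v w) : tri i (w - v) < 0 ∧ 0 < tri j (w - v) := by
  have hvw : v ≠ w := by rintro rfl; simp at hcr
  have ni := H.tri_ne i hv.1 hw.1 hvw
  have nj := H.tri_ne j hv.1 hw.1 hvw
  have h1 : ¬ inPos k v w := slope_aux H F hs hv hw hsub hcr
  have h2 : ¬ inPos k w v := by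
    refine slope_aux H F (neg_ne_zero.mpr hs) hw hv (fun z hz hzn => ?_) ?_
    · rw [mul_comm]; exact hsub z hz hzn
    · rw [cr_swap]; simp only [cr] at hcr ⊢; linarith
  rw [F.inPos_iff] at h1 h2
  obtain ⟨hvi, hvj⟩ := neg_coords F hv.2.2
  obtain ⟨hwi, hwj⟩ := neg_coords F hw.2.2
  rw [hF, tri_add i w v u, tri_add j w v u] at hcr
  rw [tri_rev i, tri_rev j] at h2
  rcases ni.lt_or_gt with ni | ni <;> rcases nj.lt_or_gt with nj | nj
  · exact absurd ⟨by linarith, by linarith⟩ h2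
  · exact ⟨ni, nj⟩
  · nlinarith
  · exact absurd ⟨ni, nj⟩ h1

/-- The angular coordinate in the negative cone of `u`. -/
def gk (i j : ℕ) (u p : Pt) : ℝ := tri i (p - u) / tri j (p - u)

theorem gk_lt (F : Fr i j k)
    (hF : ∀ a b c, cr s a b c =
      tri j (b - a) * tri i (c - a) - tri i (b - a) * tri j (c - a)) {u p q : Pt}
    (hp : inNeg k u p) (hq : inNeg k u q) : gk i j u p < gk i j u q ↔ 0 < cr s u p q := by
  obtain ⟨h1, h2⟩ := neg_coords F hp
  obtain ⟨h3, h4⟩ := neg_coords F hq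
  rw [hF, gk, gk, ← neg_div_neg_eq, ← neg_div_neg_eq (tri i (q - u)),
    div_lt_div_iff₀ (by linarith) (by linarith)]
  constructor <;> intro h <;> linarith

theorem gk_inj (H : Setting P S) (F : Fr i j k) (hs : s ≠ 0)
    (hF : ∀ a b c, cr s a b c =
      tri j (b - a) * tri i (c - a) - tri i (b - a) * tri j (c - a)) {u p q : Pt}
    (hu : u ∈ P) (hp : p ∈ P) (hq : q ∈ P) (hpu : inNeg k u p) (hqu : inNeg k u q)
    (h : gk i j u p = gk i j u q) : p = q := by
  by_contra hpq
  have ne : ∀ y, inNeg k u y → u ≠ y := by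
    rintro y hy rfl
    have := (neg_coords F hy).1
    rw [tri_sub] at this; linarith
  have h0 := H.cr_ne hs hu hp hq (ne p hpu) hpq (ne q hqu)
  rcases h0.lt_or_gt with h0 | h0
  · rw [cr_swap] at h0
    have := (gk_lt F hF hqu hpu).mpr (by linarith)
    linarith
  · have := (gk_lt F hF hpu hqu).mpr h0
    linarith

/-- `y` lies strictly between `x` and `z`, in either order. -/
def Btw (x y z : ℝ) : Prop := (x < y ∧ y < z) ∨ (z < y ∧ y < x)

theorem sameSubNeg_iff (F : Fr i j k) (hs : s ≠ 0)
    (hF : ∀ a b c, cr s a b c =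
      tri j (b - a) * tri i (c - a) - tri i (b - a) * tri j (c - a)) {u p q : Pt}
    (hp : inNeg k u p) (hq : inNeg k u q) : SameSubNeg S k u p q ↔
      ∀ z, Constr S u z → inNeg k u z → ¬ Btw (gk i j u p) (gk i j u z) (gk i j u q) := by
  have key : ∀ z, inNeg k u z → (crossP (z - u) (p - u) * crossP (z - u) (q - u) < 0 ↔
      Btw (gk i j u p) (gk i j u z) (gk i j u q)) := by
    intro z hz
    rw [sep_iff hs, mul_neg_iff, Btw, gk_lt F hF hp hz, gk_lt F hF hz hq, gk_lt F hF hq hz,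
      gk_lt F hF hz hp, cr_swap s u p z, cr_swap s u q z]
    constructor
    · rintro (⟨h1, h2⟩ | ⟨h1, h2⟩)
      · right; constructor <;> linarith
      · left; constructor <;> linarith
    · rintro (⟨h1, h2⟩ | ⟨h1, h2⟩)
      · right; constructor <;> linarith
      · left; constructor <;> linarith
  unfold SameSubNeg SameSubIn
  exact forall_congr' fun z => forall_congr' fun _ => forall_congr' fun hz =>
    not_congr (key z hz)

/-- Every constraint of `u` in the cone that separates `a` from `b` leads to a canonical
vertex; then the canonical paths of consecutive subcones link up to a path from `a` to `b`. -/
def Lk (P : Set Pt) (S : Set (Pt × Pt)) (i j k : ℕ) (u a b : Pt) : Prop :=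
  ∀ z, Constr S u z → inNeg k u z → Btw (gk i j u a) (gk i j u z) (gk i j u b) →
    CanonVert P S k u z

theorem Lk.symm {u a b : Pt} (h : Lk P S i j k u a b) : Lk P S i j k u b a :=
  fun z h1 h2 h3 => h z h1 h2 h3.symm

/-- Canonical paths are monotone in the horizontal coordinate `tri j - tri i`, which bounds
their lengths. -/
theorem canon_path (H : Setting P S) (F : Fr i j k) (hs : 0 < s)
    (hF : ∀ a b c, cr s a b c =
      tri j (b - a) * tri i (c - a) - tri i (b - a) * tri j (c - a)) {u : Pt} (hu : u ∈ P) :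
    ∀ ab ∈ {p | CanonVert P S k u p} ×ˢ {p | CanonVert P S k u p},
      gk i j u ab.1 < gk i j u ab.2 → Lk P S i j k u ab.1 ab.2 →
      Conn (G9Edge P S) ab.1 ab.2 (tri j (ab.2 - ab.1) - tri i (ab.2 - ab.1)) := by
  have hfin : {p | CanonVert P S k u p}.Finite := H.fin.subset fun p hp => hp.1
  refine finite_key_induction (hfin.prod hfin) (fun ab => gk i j u ab.2 - gk i j u ab.1) _ ?_
  rintro ⟨a, b⟩ ⟨ha, hb⟩ ih hab hL
  simp only [Set.mem_ofPred_eq] at ha hb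
  simp only at hab hL ih ⊢
  by_cases hex : ∃ x, CanonVert P S k u x ∧ gk i j u a < gk i j u x ∧ gk i j u x < gk i j u b
  · obtain ⟨x, hx, h1, h2⟩ := hex
    have c1 := ih (a, x) ⟨ha, hx⟩ (by simp only; linarith) h1 fun z hz hzn hzb =>
      hL z hz hzn (by
        rcases hzb with ⟨h3, h4⟩ | ⟨h3, h4⟩
        · exact .inl ⟨h3, by linarith⟩
        · linarith)
    have c2 := ih (x, b) ⟨hx, hb⟩ (by simp only; linarith) h2 fun z hz hzn hzb =>
      hL z hz hzn (by
        rcases hzb with ⟨h3, h4⟩ | ⟨h3, h4⟩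
        · exact .inl ⟨by linarith, h4⟩
        · linarith)
    refine (c1.trans c2).mono (le_of_eq ?_)
    simp only [tri_add i b x a, tri_add j b x a]; ring
  · have hsub : SameSubNeg S k u a b := by
      rw [sameSubNeg_iff F hs.ne' hF ha.2.2 hb.2.2]
      intro z hz hzn hzb
      rcases id hzb with ⟨h3, h4⟩ | ⟨h3, h4⟩
      · exact hex ⟨z, hL z hz hzn hzb, h3, h4⟩
      · linarith
    have hcr := (gk_lt F hF ha.2.2 hb.2.2).mp hab
    have hE : G9Edge P S a b := by
      refine .inl ⟨u, hu, k, F.lt, .inl ⟨ha, hb, hsub, ?_, ?_⟩⟩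
      · exact pos_of_mul_pos_right hcr hs.le
      · rintro x - hx - ⟨h1, h2⟩
        exact hex ⟨x, hx, (gk_lt F hF ha.2.2 hx.2.2).mpr (mul_pos hs h1),
          (gk_lt F hF hx.2.2 hb.2.2).mpr (mul_pos hs h2)⟩
    obtain ⟨h1, h2⟩ := slope H F hs.ne' hF ha hb hsub hcr
    refine (Conn.edge hE).mono ?_
    rw [F.dst_eq]
    refine Real.sqrt_le_iff.mpr ⟨by linarith, ?_⟩
    nlinarith [mul_pos (neg_pos.mpr h1) h2]

theorem G9Edge.symm {a b : Pt} (h : G9Edge P S a b) : G9Edge P S b a := by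
  rcases h with ⟨u, hu, i, hi, h⟩ | ⟨i, hi, h⟩
  · exact .inl ⟨u, hu, i, hi, h.symm⟩
  · exact .inr ⟨i, hi, h.symm⟩

theorem G9Edge.conn_symm {u w : Pt} {L : ℝ} (h : Conn (G9Edge P S) u w L) :
    Conn (G9Edge P S) w u L := h.symm fun _ _ => G9Edge.symm

theorem stretch_three {a b a' b' : ℝ} (ha : 0 < a) (hb : 0 < b) (ha' : 0 < a') (hb' : 0 < b')
    (h : a' + b' ≤ a + b) :
    a' + b' + |(a - b) - (a' - b')| ≤ 3 * √(a ^ 2 + a * b + b ^ 2) := by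
  have h1 : 3 * a + b ≤ 3 * √(a ^ 2 + a * b + b ^ 2) := by
    have : (3 * a + b) / 3 ≤ √(a ^ 2 + a * b + b ^ 2) := by
      apply Real.le_sqrt_of_sq_le; nlinarith [mul_pos ha hb]
    linarith
  have h2 : a + 3 * b ≤ 3 * √(a ^ 2 + a * b + b ^ 2) := by
    have : (a + 3 * b) / 3 ≤ √(a ^ 2 + a * b + b ^ 2) := by
      apply Real.le_sqrt_of_sq_le; nlinarith [mul_pos ha hb]
    linarith
  rcases abs_cases ((a - b) - (a' - b')) with ⟨h3, -⟩ | ⟨h3, -⟩ <;> rw [h3] <;> linarith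

theorem G9_neg (H : Setting P S) (hk : k < 3) {u w : Pt} (hw : CanonVert P S k u w) :
    Conn (G9Edge P S) u w (3 * dst u w) := by
  classical
  obtain ⟨i, j, F, s, hs, hF⟩ := Fr.exists_pos hk
  obtain ⟨hu, -⟩ := canon_edge hk hw
  -- among the canonical vertices linked to `w`, one of least projected distance from `u`
  -- is closest in its own subcone
  let T : Set Pt := {y | CanonVert P S k u y ∧ Lk P S i j k u w y}
  have hT : T.Finite := H.fin.subset fun p hp => hp.1.1
  have hwT : w ∈ T := ⟨hw, fun z _ _ hz => by rcases hz with ⟨h1, h2⟩ | ⟨h1, h2⟩ <;> linarith⟩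
  obtain ⟨y, ⟨hy, hLy⟩, hmin⟩ := hT.exists_minimalFor (fun y => negProj k u y) T ⟨w, hwT⟩
  have hmin' : ∀ y' ∈ T, negProj k u y ≤ negProj k u y' := fun y' h' => by
    rcases le_total (negProj k u y) (negProj k u y') with h | h
    · exact h
    · exact hmin h' h
  have hcl : ClosestCanon P S k u y := by
    refine ⟨hy, fun y' _ hy' hsub => hmin' y' ⟨hy', fun z hz hzn hzb => ?_⟩⟩
    rw [sameSubNeg_iff F hs.ne' hF hy.2.2 hy'.2.2] at hsub
    have hno := hsub z hz hzn
    rcases lt_trichotomy (gk i j u z) (gk i j u y) with h | h | h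
    · refine hLy z hz hzn ?_
      rcases hzb with ⟨h1, h2⟩ | ⟨h1, h2⟩
      · exact .inl ⟨h1, h⟩
      · exact absurd (.inr ⟨h1, h⟩) hno
    · rwa [gk_inj H F hs.ne' hF hu (H.mem hz).2 hy.1 hzn hy.2.2 h]
    · refine hLy z hz hzn ?_
      rcases hzb with ⟨h1, h2⟩ | ⟨h1, h2⟩
      · exact absurd (.inl ⟨h, h2⟩) hno
      · exact .inr ⟨h, h2⟩
  have hle := hmin' w hwT
  rw [negProj, negProj, F.proj_le] at hle
  obtain ⟨hwi, hwj⟩ := (F.inPos_iff w u).mp hw.2.2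
  obtain ⟨hyi, hyj⟩ := (F.inPos_iff y u).mp hy.2.2
  have c1 : Conn (G9Edge P S) u y (tri i (u - y) + tri j (u - y)) := by
    refine (Conn.edge (.inr ⟨k, hk, .inl hcl⟩)).mono ?_
    rw [dst_comm, F.dst_eq]
    refine Real.sqrt_le_iff.mpr ⟨by linarith, ?_⟩
    nlinarith [mul_pos hyi hyj]
  have ei : tri i (w - y) = tri i (u - y) - tri i (u - w) := by simp only [tri_sub]; ring
  have ej : tri j (w - y) = tri j (u - y) - tri j (u - w) := by simp only [tri_sub]; ring
  have c2 : Conn (G9Edge P S) y w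
      |(tri i (u - w) - tri j (u - w)) - (tri i (u - y) - tri j (u - y))| := by
    rcases lt_trichotomy (gk i j u y) (gk i j u w) with h | h | h
    · refine (canon_path H F hs hF hu (y, w) ⟨hy, hw⟩ h hLy.symm).mono
        (le_trans (le_of_eq ?_) (le_abs_self _))
      simp only [ei, ej]; ring
    · rw [gk_inj H F hs.ne' hF hu hy.1 hw.1 hy.2.2 hw.2.2 h]
      exact .nil _ _ (abs_nonneg _)
    · refine (G9Edge.conn_symm (canon_path H F hs hF hu (w, y) ⟨hw, hy⟩ h hLy)).mono
        (le_trans (le_of_eq ?_) (neg_le_abs _))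
      simp only [tri_rev i y w, tri_rev j y w, ei, ej]; ring
  refine (c1.trans c2).mono ?_
  rw [dst_comm, F.dst_eq]
  exact stretch_three hwi hwj hyi hyj hle

theorem HEdge.symm {a b : Pt} (h : HEdge P S a b) : HEdge P S b a := Or.symm h

theorem HEdge.conn_symm {u w : Pt} {L : ℝ} (h : Conn (HEdge P S) u w L) :
    Conn (HEdge P S) w u L := h.symm fun _ _ => HEdge.symm

theorem G9_stretch (H : Setting P S) {u w : Pt} (h : HEdge P S u w) :
    Conn (G9Edge P S) u w (3 * dst u w) := by
  have key : ∀ {u w}, EdgeDir P S u w → Conn (G9Edge P S) w u (3 * dst w u) := by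
    intro u w h
    obtain ⟨k, hk, hp, -⟩ := h.2.2
    exact G9_neg H hk ⟨h.1, .inr h, hp⟩
  rcases h with h | h
  · rw [dst_comm]; exact G9Edge.conn_symm (key h)
  · exact key h

end CHT6

namespace CHT6

/-! ### The half-θ₆-graph is a 2-spanner of the visibility graph -/

variable {P : Set Pt} {S : Set (Pt × Pt)} {s : ℝ} {i j k : ℕ}

theorem cr_trans (m : ℕ) {u p q r : Pt} (hp : 0 < tri m (p - u)) (hq : 0 < tri m (q - u))
    (hr : 0 < tri m (r - u)) (h1 : 0 < cr s u p q) (h2 : 0 ≤ cr s u q r) : 0 < cr s u p r := by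
  have h := tri_comb s m u p r q
  have h3 := mul_pos h1 hr
  have h4 := mul_nonneg h2 hp.le
  by_contra hc
  have := mul_nonneg hq.le (neg_nonneg.mpr (not_lt.mp hc))
  linarith

/-- Transitivity of the angular order around `v` in the open half plane right of `uv`. -/
theorem cr_trans' {u v p q r : Pt} (hp : 0 < cr s u v p) (hq : 0 < cr s u v q)
    (hr : 0 < cr s u v r) (h1 : 0 < cr s v p q) (h2 : 0 ≤ cr s v q r) : 0 < cr s v p r := by
  have h : cr s u v q * cr s v p r = cr s v p q * cr s u v r + cr s v q r * cr s u v p := by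
    simp only [cr, crossP, Prod.fst_sub, Prod.snd_sub]; ring
  have h3 := mul_pos h1 hr
  have h4 := mul_nonneg h2 hp.le
  by_contra hc
  have := mul_nonneg hq.le (neg_nonneg.mpr (not_lt.mp hc))
  linarith

theorem in_cone (F : Fr i j k) {u v w x : Pt} (hv : inPos k u v) (hw : inPos k u w)
    (hD : 0 < cr s u v w) (h1 : 0 ≤ cr s u x w) (h2 : 0 ≤ cr s u v x)
    (h3 : 0 < cr s u x w + cr s u v x) : inPos k u x := by
  rw [F.inPos_iff] at hv hw ⊢
  have key : ∀ m, 0 < tri m (v - u) → 0 < tri m (w - u) → 0 < tri m (x - u) := by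
    intro m hv hw
    have h := tri_comb s m u v w x
    have h4 := mul_nonneg h1 hv.le
    have h5 := mul_nonneg h2 hw.le
    have h6 : 0 < cr s u x w * tri m (v - u) + cr s u v x * tri m (w - u) := by
      rcases h1.eq_or_lt with h7 | h7
      · have := mul_pos (show 0 < cr s u v x by linarith) hw
        linarith
      · have := mul_pos h7 hv
        linarith
    by_contra hc
    have := mul_nonneg (neg_nonneg.mpr (not_lt.mp hc)) hD.le
    linarith
  exact ⟨key i hv.1 hw.1, key j hv.2 hw.2⟩

theorem in_height {u v w x : Pt} {M : ℝ} (hM : 0 ≤ M)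
    (hv : tri i (v - u) + tri j (v - u) ≤ M) (hw : tri i (w - u) + tri j (w - u) ≤ M)
    (hD : 0 < cr s u v w) (h1 : 0 ≤ cr s u x w) (h2 : 0 ≤ cr s u v x)
    (h3 : 0 ≤ cr s v w x) : tri i (x - u) + tri j (x - u) ≤ M := by
  have hi := tri_comb s i u v w x
  have hj := tri_comb s j u v w x
  have hsum := bary_sum s u v w x
  have h4 := mul_le_mul_of_nonneg_left hv h1
  have h5 := mul_le_mul_of_nonneg_left hw h2
  have h6 := mul_nonneg h3 hM
  refine le_of_mul_le_mul_right ?_ hD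
  rw [← hsum] at hi hj ⊢
  linarith

/-- `v` is one of the vertices visible from `u` in the subcone of the positive cone `Cₖ`
containing `w`. -/
structure Wd (P : Set Pt) (S : Set (Pt × Pt)) (k : ℕ) (u w v : Pt) : Prop where
  mem : v ∈ P
  cone : inPos k u v
  see : CanSee S u v
  sub : SameSubPos S k u w v

theorem inPos_ne (hk : k < 3) {u v : Pt} (h : inPos k u v) : v ≠ u := by
  rintro rfl
  have := inPos_neg hk h
  rw [tri_sub] at this; linarith

/-- No visible vertex of the subcone of `w` at `u` is both to the right of `uw` and lower than `w`. -/
def REmp (P : Set Pt) (S : Set (Pt × Pt)) (i j k : ℕ) (u w : Pt) : Prop :=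
  ∀ p ∈ P, inPos k u p → CanSee S u p → SameSubPos S k u w p →
    tri i (w - u) * tri j (p - u) < tri j (w - u) * tri i (p - u) →
    tri i (w - u) + tri j (w - u) ≤ tri i (p - u) + tri j (p - u)

/-- The spanning bounds, for all visibility edges of size less than `N`. With `A` and `B` the
coordinates of `w - u`, the first bound is `max (2 * A + B) (A + 2 * B)`. -/
def Good (P : Set Pt) (S : Set (Pt × Pt)) (N : ℝ) : Prop :=
  ∀ i j k u w, Fr i j k → u ∈ P → w ∈ P → tri i (w - u) + tri j (w - u) < N →
    CanSee S u w → inPos k u w →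
    Conn (HEdge P S) u w
      (2 * tri i (w - u) + tri j (w - u) + max 0 (tri j (w - u) - tri i (w - u))) ∧
    (REmp P S i j k u w → Conn (HEdge P S) u w (2 * tri i (w - u) + tri j (w - u)))

/-- A visibility edge `uw` with `w` in the positive cone `Cₖ` of `u`, with coordinates and an
orientation in which the left of `uw` is the set of `v` with `0 < cr s u v w`. -/
structure Ctx (P : Set Pt) (S : Set (Pt × Pt)) (s : ℝ) (i j k : ℕ) (u w : Pt) : Prop where
  H : Setting P S
  F : Fr i j k
  hs : s ≠ 0
  hF : ∀ a b c, cr s a b c = tri j (b - a) * tri i (c - a) - tri i (b - a) * tri j (c - a)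
  hu : u ∈ P
  hw : w ∈ P
  see : CanSee S u w
  cone : inPos k u w

variable {u v w x : Pt}

theorem Ctx.ne (C : Ctx P S s i j k u w) {z : Pt} (hz : inPos k u z) : z ≠ u :=
  inPos_ne C.F.lt hz

theorem Ctx.pos (C : Ctx P S s i j k u w) {z : Pt} (hz : inPos k u z) : 0 < tri i (z - u) :=
  ((C.F.inPos_iff u z).mp hz).1

theorem Ctx.nosep (C : Ctx P S s i j k u w) (hv : Wd P S k u w v) (hvw : 0 < cr s u v w) :
    ∀ z, Constr S u z → ¬ (0 < cr s u v z ∧ 0 < cr s u z w) := by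
  rintro z hz ⟨h1, h2⟩
  refine hv.sub z hz (in_cone C.F hv.cone C.cone hvw h2.le h1.le (by linarith)) ?_
  rw [sep_iff C.hs, cr_swap s u v z]
  nlinarith

theorem Cut.axc' (hx : Cut P S s u v w x) : 0 ≤ cr s u x w := by
  by_cases hc : x = w
  · rw [hc]; simp
  · exact (hx.axc hc).le

theorem Cut.wd (C : Ctx P S s i j k u w) (hv : Wd P S k u w v) (hvw : 0 < cr s u v w)
    (hx : Cut P S s u v w x) : Wd P S k u w x := by
  have h1 := hx.abx
  have h2 := hx.axc'
  have hc : inPos k u x := in_cone C.F hv.cone C.cone hvw h2 h1.le (by linarith)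
  refine ⟨hx.mem, hc, hx.see_a, fun z hz hzc hlt => ?_⟩
  rw [sep_iff C.hs] at hlt
  rcases mul_neg_iff.mp hlt with ⟨h3, h4⟩ | ⟨h3, h4⟩
  · rw [cr_swap] at h4
    exact C.nosep hv hvw z hz
      ⟨cr_trans i (C.pos hv.cone) (C.pos hc) (C.pos hzc) h1 (by linarith), h3⟩
  · rw [cr_swap] at h3
    have := cr_trans i (C.pos C.cone) (C.pos hzc) (C.pos hc) (by linarith) h4.le
    rw [cr_swap] at this
    linarith

theorem cr_neg (s : ℝ) (a b c : Pt) : cr (-s) a b c = -cr s a b c := by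
  simp only [cr]; ring

theorem mem_seg_left (z v : Pt) {t : ℝ} (h0 : 0 < t) (h1 : t < 1) :
    (1 - t) • v + t • z ∈ openSegment ℝ z v :=
  ⟨t, 1 - t, h0, by linarith, by ring, by rw [add_comm]⟩

/-- If the lower right part of the subcone of `w` at `u` is empty, then so is the one of `x` at
`v`: a vertex in the latter would give, by a hull argument in the triangle it spans with `v` and
`u`, a vertex in the former. -/
theorem remp_two (C : Ctx P S s i j k u w) (hv : Wd P S k u w v) (hvw : 0 < cr s u v w)
    (hx : Cut P S s u v w x)
    (hxh : tri i (x - u) + tri j (x - u) ≤ tri i (w - u) + tri j (w - u))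
    (hvx : inPos k v x) (hR : REmp P S i j k u w) : REmp P S i j k v x := by
  intro p hp hvp hsp hss hrt
  by_contra hlow
  push Not at hlow
  obtain ⟨hxi, hxj⟩ := (C.F.inPos_iff _ _).mp hvx
  obtain ⟨hpi, hpj⟩ := (C.F.inPos_iff _ _).mp hvp
  obtain ⟨hvi, hvj⟩ := (C.F.inPos_iff _ _).mp hv.cone
  have hpu : inPos k u p := by
    rw [C.F.inPos_iff, tri_add i p v u, tri_add j p v u]
    constructor <;> linarith
  have f_p : 0 < cr s v x p := by rw [C.hF]; linarith
  have abx := hx.abx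
  have r_p : 0 < cr s u v p := by
    have h1 := mul_pos f_p hvi
    have h2 := mul_pos abx hpi
    have h : cr s u v p * tri i (x - v) =
        cr s v x p * tri i (v - u) + cr s u v x * tri i (p - v) := by
      simp only [C.hF, tri_sub]; ring
    by_contra hc
    have := mul_nonneg (neg_nonneg.mpr (not_lt.mp hc)) hxi.le
    linarith
  have hD : 0 < cr (-s) v u p := by rw [cr_neg, cr_swap']; linarith
  obtain ⟨p', hp'⟩ := C.H.exists_cut (neg_ne_zero.mpr C.hs) hv.mem C.hu hp hD hv.see.symm hsp (by
    rintro z hz ⟨h1, h2⟩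
    rw [cr_neg, cr_swap'] at h1
    rw [cr_neg, cr_swap] at h2
    obtain ⟨t, ht0, ht1, ht⟩ := exists_small (g' := cr s u z w) hvw
    have f_z : 0 < cr s v x z :=
      cr_trans' abx r_p (by linarith : 0 < cr s u v z) f_p (by linarith)
    refine hx.nocross z v _ hz.symm (mem_seg_left z v ht0 ht1) ?_ ?_ ?_ f_z
    · rw [cr_comb _ _ _ _ _ (by ring)]
      have := mul_pos ht0 (by linarith : 0 < cr s u v z)
      simp only [cr_self₃]; linarith
    · rw [cr_comb' _ _ _ _ _ (by ring)]
      exact ht t ht0.le le_rfl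
    · rw [cr_comb _ _ _ _ _ (by ring)]
      have := mul_pos ht0 f_z
      simp only [cr_self₂]; linarith)
  have q1 : 0 < cr s u v p' := by
    have := hp'.abx
    rw [cr_neg, cr_swap'] at this; linarith
  have q2 : 0 ≤ cr s v p p' := by
    have := hp'.axc'
    rw [cr_neg, cr_swap] at this; linarith
  have q3 := hp'.bcx
  have f_p' : 0 < cr s v x p' := cr_trans' abx r_p q1 f_p q2
  have e1 : cr (-s) u p v = cr (-s) v u p := by rw [cr_rot (-s) v u p]
  have e2 : cr (-s) u p' v = cr (-s) v u p' := by rw [cr_rot (-s) v u p']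
  have e3 : cr (-s) p v p' = cr (-s) v p' p := by rw [cr_rot (-s) v p' p, cr_rot (-s) p' p v]
  have q4 := hp'.axc'
  have q5 := hp'.abx
  have hcone : inPos k u p' :=
    in_cone C.F hpu hv.cone (by rwa [e1]) (by rw [e2]; exact q5.le) q3
      (by rw [e2]; linarith)
  have hright : 0 < cr s u w p' := by
    rcases hx.escape p' hp'.mem hp'.ne_b f_p' with h | h
    · linarith
    · rw [cr_swap] at h; linarith
  have hsub : SameSubPos S k u w p' := by
    intro z hz hzc hlt
    rw [sep_iff C.hs] at hlt
    have hno := hp'.nosep_b z hz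
    rw [cr_neg, cr_neg, cr_swap'] at hno
    rcases mul_neg_iff.mp hlt with ⟨h3, h4⟩ | ⟨h3, h4⟩
    · rw [cr_swap] at h4
      have := cr_trans i (C.pos hzc) (C.pos C.cone) (C.pos hcone) h3 hright.le
      rw [cr_swap] at this
      linarith
    · rw [cr_swap] at h3
      have h5 := cr_trans i (C.pos hv.cone) (C.pos C.cone) (C.pos hzc) hvw (by linarith)
      rw [cr_swap] at h4
      exact hno ⟨by linarith, by linarith⟩
  have hle := hR p' hp'.mem hcone hp'.see_b hsub (by
    rw [C.hF] at hright; linarith)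
  have hvx' : tri i (v - u) + tri j (v - u) < tri i (w - u) + tri j (w - u) := by
    rw [tri_add i x v u, tri_add j x v u] at hxh; linarith
  have hpw : tri i (p - u) + tri j (p - u) < tri i (w - u) + tri j (w - u) := by
    rw [tri_add i x v u, tri_add j x v u] at hxh
    rw [tri_add i p v u, tri_add j p v u]; linarith
  have := in_height (s := -s) (u := u) (v := p) (w := v) (x := p') (i := i) (j := j)
    (M := max (tri i (v - u) + tri j (v - u)) (tri i (p - u) + tri j (p - u)))
    (le_max_of_le_left (by linarith)) (le_max_right _ _) (le_max_left _ _) (by rwa [e1])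
    (by rw [e2]; exact q5.le) q3 (by rw [e3]; exact q4)
  have := max_lt hvx' hpw
  linarith

/-- On a descending step of the chain from `v` to `x`, the edge is viewed from `x`, in whose
positive cone `Cᵢ` the point `v` lies; the relevant part of that cone is always empty. -/
theorem remp_one (C : Ctx P S s i j k u w) (hv : Wd P S k u w v) (hvw : 0 < cr s u v w)
    (hx : Cut P S s u v w x)
    (inv : ∀ z, Wd P S k u w z → 0 ≤ cr s u z w → cr s v x z ≤ 0) :
    REmp P S k j i x v := by
  intro p hp hxp hsp hss hrt
  by_contra hlow
  push Not at hlow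
  have hxW := hx.wd C hv hvw
  have abx := hx.abx
  obtain ⟨hpk, hpj⟩ := (C.F.rot.inPos_iff _ _).mp hxp
  obtain ⟨hvi, hvj⟩ := (C.F.inPos_iff _ _).mp hv.cone
  obtain ⟨hxi, hxj⟩ := (C.F.inPos_iff _ _).mp hxW.cone
  rw [C.F.sum] at hpk
  rw [C.F.sum, C.F.sum] at hrt hlow
  have f_p : 0 < cr s v x p := by
    rw [C.hF]; simp only [tri_sub] at hrt ⊢; nlinarith
  have hpu : inPos k u p := by
    rw [C.F.inPos_iff]
    simp only [tri_sub] at *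
    constructor <;> linarith
  have hD : 0 < cr s x u p := by
    have h1 := mul_pos hpj hxi
    have h2 : 0 < -tri i (p - x) * tri j (x - u) := mul_pos (by linarith) hxj
    rw [C.hF]; simp only [tri_sub] at h1 h2 ⊢; nlinarith
  have upx : 0 < cr s u p x := by rwa [cr_rot s x u p] at hD
  have xu : cr s v x u = cr s u v x := by rw [cr_rot s u v x]
  -- `cr s v x` is positive at `u` and `p` and zero at `x`
  have bary : ∀ z, 0 < cr s x u z → 0 ≤ cr s x z p → 0 < cr s v x z := by
    intro z h1 h2
    have h := cr_bary s x u p v x z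
    rw [xu, cr_self₃] at h
    have h3 := mul_nonneg h2 abx.le
    have h4 := mul_pos h1 f_p
    by_contra hc
    have := mul_nonneg (neg_nonneg.mpr (not_lt.mp hc)) hD.le
    linarith
  obtain ⟨p', hp'⟩ := C.H.exists_cut C.hs hx.mem C.hu hp hD hx.see_a.symm hsp (by
    rintro z hz ⟨h1, h2⟩
    have f_z := bary z h1 h2.le
    obtain ⟨t₁, ht0, ht1, ht⟩ := exists_small (g' := cr s u v z) abx
    have hw' : ∃ t, 0 < t ∧ t < 1 ∧ ∀ t', 0 < t' → t' ≤ t →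
        0 < (1 - t') * cr s u x w + t' * cr s u z w := by
      by_cases hc : x = w
      · refine ⟨1 / 2, by norm_num, by norm_num, fun t' h3 _ => ?_⟩
        rw [← hc, cr_self₃, ← cr_rot s x u z]
        have := mul_pos h3 h1
        linarith
      · obtain ⟨t, h3, h4, h5⟩ := exists_small (g' := cr s u z w) (hx.axc hc)
        exact ⟨t, h3, h4, fun t' h6 h7 => h5 t' h6.le h7⟩
    obtain ⟨t₂, hu0, hu1, hut⟩ := hw'
    have hm := lt_min ht0 hu0
    refine hx.nocross z x _ hz.symm
      (mem_seg_left z x hm (lt_of_le_of_lt (min_le_left t₁ t₂) ht1)) ?_ ?_ ?_ f_z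
    · rw [cr_comb _ _ _ _ _ (by ring)]
      exact ht _ hm.le (min_le_left _ _)
    · rw [cr_comb' _ _ _ _ _ (by ring)]
      exact hut _ hm (min_le_right _ _)
    · rw [cr_comb _ _ _ _ _ (by ring)]
      have := mul_pos hm f_z
      simp only [cr_self₃]; linarith)
  have q1 : 0 < cr s u p' x := by
    have := hp'.abx
    rwa [cr_rot s x u p'] at this
  have f_p' : 0 < cr s v x p' := bary p' hp'.abx hp'.axc'
  have hcone : inPos k u p' := in_cone C.F hpu hxW.cone upx q1.le hp'.bcx
    (by have := hp'.bcx; linarith)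
  have hleft : 0 < cr s u p' w :=
    cr_trans i (C.pos hcone) (C.pos hxW.cone) (C.pos C.cone) q1 hx.axc'
  have hsub : SameSubPos S k u w p' := by
    intro z hz hzc hlt
    rw [sep_iff C.hs] at hlt
    have hno := hp'.nosep_b z hz
    rw [cr_rot s x u z] at hno
    rcases mul_neg_iff.mp hlt with ⟨h3, h4⟩ | ⟨h3, h4⟩
    · have h5 : 0 < cr s u p' z := by rw [cr_swap]; linarith
      rcases lt_trichotomy (cr s u z x) 0 with h6 | h6 | h6
      · refine hxW.sub z hz hzc ?_
        rw [sep_iff C.hs]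
        exact mul_neg_of_pos_of_neg h3 h6
      · have hzx : z = x := by
          by_contra hne
          exact C.H.cr_ne C.hs C.hu (C.H.mem hz).2 hx.mem (C.ne hzc).symm hne hx.ne_a.symm h6
        subst hzx
        refine hv.sub z hz hzc ?_
        rw [sep_iff C.hs, cr_swap s u v z] at *
        exact mul_neg_of_pos_of_neg h3 (by linarith)
      · exact hno ⟨h6, h5⟩
    · have h5 := cr_trans i (C.pos hzc) (C.pos hcone) (C.pos C.cone) h4 hleft.le
      linarith
  have := inv p' ⟨hp'.mem, hcone, hp'.see_b, hsub⟩ hleft.le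
  linarith

end CHT6

namespace CHT6

/-! ### The convex chain of visibility edges -/

variable {P : Set Pt} {S : Set (Pt × Pt)} {s : ℝ} {i j k : ℕ} {u v w x : Pt}

/-- The path bounds from `v` to the end `w` of the chain that leaves `u` at its lowest visible
vertex and reaches `v` in direction `(ma, mb)`. -/
structure Tail (P : Set Pt) (S : Set (Pt × Pt)) (i j k : ℕ) (u w v : Pt) (ma mb : ℝ) : Prop where
  emp : REmp P S i j k u w → Conn (HEdge P S) v w (2 * tri i (w - v) + tri j (w - v))
  gen : Conn (HEdge P S) v w
    (2 * tri i (w - v) + tri j (w - v) + max 0 (tri j (w - u) - tri i (w - u)))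
  steep : ma ≤ mb → Conn (HEdge P S) v w
    (2 * tri i (w - v) + tri j (w - v) + (tri j (w - v) - tri i (w - v)))

theorem Tail.refl (ma mb : ℝ) : Tail P S i j k u w w ma mb := by
  refine ⟨fun _ => .nil _ _ ?_, .nil _ _ ?_, fun _ => .nil _ _ ?_⟩
  · simp only [tri_sub i w w, tri_sub j w w]; linarith
  · have := le_max_left 0 (tri j (w - u) - tri i (w - u))
    simp only [tri_sub i w w, tri_sub j w w]; linarith
  · simp only [tri_sub i w w, tri_sub j w w]; linarith

/-- The direction `(ma, mb)` in which the chain reaches `v`: it points to the right, does not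
descend, and all relevant vertices lie to its left. -/
structure Dir (P : Set Pt) (S : Set (Pt × Pt)) (s : ℝ) (i j k : ℕ) (u w v : Pt) (ma mb : ℝ) :
    Prop where
  pos : 0 < ma
  up : 0 ≤ ma + mb
  turn : 0 < ma * tri j (v - u) - mb * tri i (v - u)
  left : ∀ z, Wd P S k u w z → 0 ≤ cr s u z w → 0 ≤ ma * tri j (z - v) - mb * tri i (z - v)

theorem pos_of_mul_eq {a b c : ℝ} (hb : 0 < b) (hc : 0 < c) (h : a * b = c) : 0 < a := by
  by_contra hn
  have := mul_nonneg (neg_nonneg.mpr (not_lt.mp hn)) hb.le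
  linarith

theorem nonneg_of_mul_eq {a b c : ℝ} (hb : 0 < b) (hc : 0 ≤ c) (h : a * b = c) : 0 ≤ a := by
  by_contra hn
  have := mul_pos (neg_pos.mpr (not_le.mp hn)) hb
  linarith

/-- The properties of the direction of the chain pass on from `v` to the next vertex `x`. -/
theorem Dir.step (C : Ctx P S s i j k u w) (hv : Wd P S k u w v) (hvw : 0 < cr s u v w)
    (hx : Cut P S s u v w x) {ma mb : ℝ} (D : Dir P S s i j k u w v ma mb) :
    Dir P S s i j k u w x (tri i (x - v)) (tri j (x - v)) ∧
    (∀ z, Wd P S k u w z → 0 ≤ cr s u z w → cr s v x z ≤ 0) ∧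
    0 ≤ ma * tri j (x - v) - mb * tri i (x - v) := by
  have hxW := hx.wd C hv hvw
  have abx := hx.abx
  obtain ⟨hvi, hvj⟩ := (C.F.inPos_iff _ _).mp hv.cone
  have hmx := D.left x hxW hx.axc'
  have e1 : cr s u v x = tri i (x - v) * tri j (v - u) - tri j (x - v) * tri i (v - u) := by
    rw [C.hF]; simp only [tri_sub]; ring
  have hpos : 0 < tri i (x - v) := by
    refine pos_of_mul_eq D.turn (add_pos_of_pos_of_nonneg (mul_pos abx D.pos)
      (mul_nonneg hmx hvi.le)) ?_
    rw [e1]; ring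
  have hup : 0 ≤ tri i (x - v) + tri j (x - v) := by
    refine nonneg_of_mul_eq D.turn (add_nonneg (mul_nonneg abx.le D.up)
      (mul_nonneg hmx (add_pos hvi hvj).le)) ?_
    rw [e1]; ring
  have inv : ∀ z, Wd P S k u w z → 0 ≤ cr s u z w → cr s v x z ≤ 0 := by
    intro z hz hzw
    by_contra hc
    push Not at hc
    have h1 : cr s u v z < 0 := by
      rcases hx.escape z hz.mem (C.ne hz.cone) hc with h | h
      · exact h
      · linarith
    have h2 := D.left z hz hzw
    -- the identity `[d,r][m,v] = [d,v][m,r] + [m,d][v,r]` of determinants, with `d = x - v`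
    -- and `r = z - v`
    have h3 : -cr s v x z * (ma * tri j (v - u) - mb * tri i (v - u)) =
        cr s u v x * (ma * tri j (z - v) - mb * tri i (z - v)) +
          (ma * tri j (x - v) - mb * tri i (x - v)) * -cr s u v z := by
      simp only [C.hF, tri_sub]; ring
    have h4 := mul_nonneg abx.le h2
    have h5 := mul_nonneg hmx (by linarith : 0 ≤ -cr s u v z)
    have h6 := mul_pos hc D.turn
    linarith
  refine ⟨⟨hpos, hup, ?_, fun z hz hzw => ?_⟩, inv, hmx⟩
  · have : tri i (x - v) * tri j (x - u) - tri j (x - v) * tri i (x - u) = cr s u v x := by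
      rw [C.hF]; simp only [tri_sub]; ring
    linarith
  · have h1 := inv z hz hzw
    rw [C.hF] at h1
    have : tri i (x - v) * tri j (z - x) - tri j (x - v) * tri i (z - x) =
      tri i (x - v) * tri j (z - v) - tri j (x - v) * tri i (z - v) := by
      simp only [tri_sub]; ring
    linarith

theorem Ctx.self (C : Ctx P S s i j k u w) : Wd P S k u w w :=
  ⟨C.hw, C.cone, C.see, fun _ _ _ h => absurd h (not_lt.mpr (mul_self_nonneg _))⟩

/-- One edge `vx` of the chain: it costs `2 * A + B`, with `A` and `B` the coordinates of
`x - v`, unless it is steep. -/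
theorem chain_edge (C : Ctx P S s i j k u w) (G : Good P S (tri i (w - u) + tri j (w - u)))
    (hv : Wd P S k u w v) (hvw : 0 < cr s u v w)
    (hx : Cut P S s u v w x)
    (hxh : tri i (x - u) + tri j (x - u) ≤ tri i (w - u) + tri j (w - u))
    {ma mb : ℝ} (D : Dir P S s i j k u w v ma mb) :
    (REmp P S i j k u w → Conn (HEdge P S) v x (2 * tri i (x - v) + tri j (x - v))) ∧
    Conn (HEdge P S) v x
      (2 * tri i (x - v) + tri j (x - v) + max 0 (tri j (x - v) - tri i (x - v))) := by
  obtain ⟨D', inv, -⟩ := D.step C hv hvw hx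
  obtain ⟨hvi, hvj⟩ := (C.F.inPos_iff _ _).mp hv.cone
  have hxW := hx.wd C hv hvw
  obtain ⟨hxi, hxj⟩ := (C.F.inPos_iff _ _).mp hxW.cone
  have hi := D'.pos
  have hj := C.H.tri_ne j hv.mem hx.mem hx.ne_b.symm
  have hk := C.H.tri_ne k hv.mem hx.mem hx.ne_b.symm
  rcases hj.lt_or_gt with hj | hj
  · -- the edge descends: it is an upward edge from `x` in the frame `k, j, i`
    have hup : 0 < tri i (x - v) + tri j (x - v) := by
      refine lt_of_le_of_ne D'.up fun h => hk ?_
      rw [C.F.sum]; linarith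
    have hc : inPos i x v := by
      rw [C.F.rot.inPos_iff, C.F.sum, tri_rev i v x, tri_rev j v x]
      constructor <;> linarith
    have h := (G k j i x v C.F.rot hx.mem hv.mem (by
      rw [C.F.sum]; simp only [tri_sub] at *; linarith) hx.see_b.symm hc).2
      (remp_one C hv hvw hx inv)
    have h1 : Conn (HEdge P S) v x (2 * tri i (x - v) + tri j (x - v)) := by
      refine (HEdge.conn_symm h).mono (le_of_eq ?_)
      rw [C.F.sum, tri_rev i v x, tri_rev j v x]; ring
    exact ⟨fun _ => h1, h1.mono (by
      have := le_max_left 0 (tri j (x - v) - tri i (x - v)); linarith)⟩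
  · have hc : inPos k v x := (C.F.inPos_iff _ _).mpr ⟨hi, hj⟩
    have h := G i j k v x C.F hv.mem hx.mem (by
      simp only [tri_sub] at *; linarith) hx.see_b hc
    exact ⟨fun hR => h.2 (remp_two C hv hvw hx hxh hc hR), h.1⟩

theorem chain (C : Ctx P S s i j k u w) (G : Good P S (tri i (w - u) + tri j (w - u))) :
    ∀ v ∈ {v | v ∈ P ∧ Wd P S k u w v ∧ 0 < cr s u v w ∧
      tri i (v - u) + tri j (v - u) ≤ tri i (w - u) + tri j (w - u)},
    ∀ ma mb, Dir P S s i j k u w v ma mb → Tail P S i j k u w v ma mb := by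
  refine finite_key_induction (C.H.fin.subset fun v hv => hv.1)
    (fun v => tri j (v - u) / tri i (v - u)) _ ?_
  rintro v ⟨-, hv, hvw, hvh⟩ ih ma mb D
  obtain ⟨x, hx⟩ := C.H.exists_cut C.hs C.hu hv.mem C.hw hvw hv.see C.see (C.nosep hv hvw)
  have hxW := hx.wd C hv hvw
  obtain ⟨hvi, hvj⟩ := (C.F.inPos_iff _ _).mp hv.cone
  obtain ⟨hxi, hxj⟩ := (C.F.inPos_iff _ _).mp hxW.cone
  have hxh : tri i (x - u) + tri j (x - u) ≤ tri i (w - u) + tri j (w - u) :=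
    in_height (by linarith) hvh le_rfl hvw hx.axc' hx.abx.le hx.bcx
  obtain ⟨D', inv, hmx⟩ := D.step C hv hvw hx
  have T : Tail P S i j k u w x (tri i (x - v)) (tri j (x - v)) := by
    by_cases hc : x = w
    · rw [hc]; exact .refl _ _
    · refine ih x ⟨hx.mem, hxW, hx.axc hc, hxh⟩ ?_ _ _ D'
      have := hx.abx
      rw [C.hF] at this
      rw [div_lt_div_iff₀ hxi hvi]
      linarith
  obtain ⟨E1, E2⟩ := chain_edge C G hv hvw hx hxh D
  have steep : tri i (x - v) ≤ tri j (x - v) → Conn (HEdge P S) v w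
      (2 * tri i (w - v) + tri j (w - v) + (tri j (w - v) - tri i (w - v))) := by
    intro h
    rw [max_eq_right (by linarith)] at E2
    refine (E2.trans (T.steep h)).mono (le_of_eq ?_)
    simp only [tri_sub]; ring
  refine ⟨fun hR => ((E1 hR).trans (T.emp hR)).mono (le_of_eq ?_), ?_, fun hm => steep ?_⟩
  · simp only [tri_sub]; ring
  · rcases le_total (tri j (x - v)) (tri i (x - v)) with h | h
    · rw [max_eq_left (by linarith)] at E2
      refine (E2.trans T.gen).mono (le_of_eq ?_)
      rw [tri_add i w x v, tri_add j w x v]; ring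
    · refine (steep h).mono ?_
      -- `w` lies to the left of the steep direction `x - v`, and to the right of `uv`
      have h1 := inv w C.self (by simp)
      rw [C.hF] at h1
      have h2 : 0 < tri j (v - u) * tri i (w - v) - tri i (v - u) * tri j (w - v) := by
        rw [C.hF] at hvw; simp only [tri_sub] at hvw ⊢; linarith
      have hup : 0 ≤ tri i (w - v) + tri j (w - v) := by
        simp only [tri_sub] at hvh ⊢; linarith
      have hd := D'.pos
      have h3 : 0 < tri i (w - v) := by
        by_contra hc
        push Not at hc
        have := mul_nonneg hvj.le (neg_nonneg.mpr hc)
        have := mul_nonneg hvi.le (by linarith : 0 ≤ tri j (w - v))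
        linarith
      have h4 : tri i (w - v) ≤ tri j (w - v) := by
        have := mul_le_mul_of_nonneg_right h h3.le
        refine le_of_mul_le_mul_left ?_ hd
        linarith
      have h5 : tri i (v - u) < tri j (v - u) := by
        have := mul_le_mul_of_nonneg_left h4 hvi.le
        refine lt_of_mul_lt_mul_right ?_ h3.le
        linarith
      have := le_max_right 0 (tri j (w - u) - tri i (w - u))
      rw [tri_add i w v u, tri_add j w v u] at this ⊢
      linarith
  · have h1 := mul_le_mul_of_nonneg_left hm D'.pos.le
    refine le_of_mul_le_mul_left ?_ D.pos
    linarith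

/-- The spanning bounds for `uw` when the lowest visible vertex `v₀` of the subcone lies to the
left of `uw`. -/
theorem claim_left (C : Ctx P S s i j k u w) (G : Good P S (tri i (w - u) + tri j (w - u)))
    {v₀ : Pt} (h0 : Wd P S k u w v₀)
    (hmin : ∀ z, Wd P S k u w z → tri i (v₀ - u) + tri j (v₀ - u) ≤ tri i (z - u) + tri j (z - u))
    (hl : 0 < cr s u v₀ w) :
    Conn (HEdge P S) u w
      (2 * tri i (w - u) + tri j (w - u) + max 0 (tri j (w - u) - tri i (w - u))) ∧
    (REmp P S i j k u w → Conn (HEdge P S) u w (2 * tri i (w - u) + tri j (w - u))) := by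
  have hne : v₀ ≠ w := by rintro rfl; simp at hl
  have hle := hmin w C.self
  obtain ⟨hvi, hvj⟩ := (C.F.inPos_iff _ _).mp h0.cone
  have hlt : tri i (v₀ - u) + tri j (v₀ - u) < tri i (w - u) + tri j (w - u) := by
    refine lt_of_le_of_ne hle fun h => C.H.tri_ne k h0.mem C.hw hne ?_
    rw [C.F.sum]; simp only [tri_sub] at h ⊢; linarith
  have hR0 : REmp P S i j k u v₀ := by
    intro p hp hpc hps hsub hrt
    by_cases hsw : SameSubPos S k u w p
    · exact hmin p ⟨hp, hpc, hps, hsw⟩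
    · exfalso
      have hvp : 0 < cr s u v₀ p := by rw [C.hF]; linarith
      unfold SameSubPos SameSubIn at hsw
      push Not at hsw
      obtain ⟨z, hz, hzc, hzs⟩ := hsw
      have h1 := hsub z hz hzc
      have h2 := h0.sub z hz hzc
      rw [sep_iff C.hs] at hzs h1 h2
      -- the constraint `uz` separates `p` from `w` but neither from `v₀`, hence `z = v₀`
      have h3 : cr s u z v₀ = 0 := by
        rcases lt_trichotomy (cr s u z v₀) 0 with h | h | h
        · rcases mul_neg_iff.mp hzs with ⟨h4, h5⟩ | ⟨h4, h5⟩
          · exact absurd (mul_neg_of_pos_of_neg h4 h) h2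
          · exact absurd (mul_neg_of_neg_of_pos h h5) h1
        · exact h
        · rcases mul_neg_iff.mp hzs with ⟨h4, h5⟩ | ⟨h4, h5⟩
          · exact absurd (mul_neg_of_pos_of_neg h h5) h1
          · exact absurd (mul_neg_of_neg_of_pos h4 h) h2
      have hzv : z = v₀ := by
        by_contra hn
        exact C.H.cr_ne C.hs C.hu (C.H.mem hz).2 h0.mem (C.ne hzc).symm hn (C.ne h0.cone).symm h3
      rw [hzv] at hzs
      have := mul_pos hl hvp
      linarith
  have c0 := (G i j k u v₀ C.F C.hu h0.mem hlt h0.see h0.cone).2 hR0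
  have D : Dir P S s i j k u w v₀ 1 (-1) := by
    refine ⟨one_pos, by norm_num, by linarith, fun z hz _ => ?_⟩
    have := hmin z hz
    simp only [tri_sub] at this ⊢; linarith
  have T := chain C G v₀ ⟨h0.mem, h0, hl, hle⟩ 1 (-1) D
  refine ⟨(c0.trans T.gen).mono (le_of_eq ?_), fun hR => (c0.trans (T.emp hR)).mono (le_of_eq ?_)⟩
  · rw [tri_add i w v₀ u, tri_add j w v₀ u]; ring
  · rw [tri_add i w v₀ u, tri_add j w v₀ u]; ring

/-- The spanning bounds hold for all visibility edges, by induction on their size. -/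
theorem H_bounds (H : Setting P S) :
    ∀ t ∈ Set.Iio 3 ×ˢ (P ×ˢ P), ∀ i j, Fr i j t.1 → CanSee S t.2.1 t.2.2 →
      inPos t.1 t.2.1 t.2.2 →
      Conn (HEdge P S) t.2.1 t.2.2 (2 * tri i (t.2.2 - t.2.1) + tri j (t.2.2 - t.2.1) +
        max 0 (tri j (t.2.2 - t.2.1) - tri i (t.2.2 - t.2.1))) ∧
      (REmp P S i j t.1 t.2.1 t.2.2 → Conn (HEdge P S) t.2.1 t.2.2
        (2 * tri i (t.2.2 - t.2.1) + tri j (t.2.2 - t.2.1))) := by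
  refine finite_key_induction ((Set.finite_Iio 3).prod (H.fin.prod H.fin))
    (fun t => -tri t.1 (t.2.2 - t.2.1)) _ ?_
  rintro ⟨k, u, w⟩ ⟨hk, hu, hw⟩ ih i j F see cone
  simp only at *
  have G : Good P S (tri i (w - u) + tri j (w - u)) := by
    intro i' j' k' u' w' F' hu' hw' hlt see' cone'
    refine ih (k', u', w') ⟨F'.lt, hu', hw'⟩ ?_ i' j' F' see' cone'
    simp only [F.sum, F'.sum]; linarith
  obtain ⟨hwi, hwj⟩ := (F.inPos_iff _ _).mp cone
  by_cases hE : EdgeDir P S u w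
  · have c : Conn (HEdge P S) u w (2 * tri i (w - u) + tri j (w - u)) := by
      refine (Conn.edge (.inl hE)).mono ?_
      rw [F.dst_eq]
      refine Real.sqrt_le_iff.mpr ⟨by linarith, ?_⟩
      nlinarith [mul_pos hwi hwj]
    exact ⟨c.mono (by have := le_max_left 0 (tri j (w - u) - tri i (w - u)); linarith),
      fun _ => c⟩
  · obtain ⟨s, hs, hF⟩ := F.exists_cr
    have C : Ctx P S s i j k u w := ⟨H, F, hs, hF, hu, hw, see, cone⟩
    have hfin : {v | Wd P S k u w v}.Finite := H.fin.subset fun v hv => hv.mem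
    obtain ⟨v₀, h0, hmin⟩ := Set.exists_min_image _
      (fun v => tri i (v - u) + tri j (v - u)) hfin ⟨w, C.self⟩
    simp only [Set.mem_ofPred_eq] at h0 hmin
    have hne : v₀ ≠ w := by
      rintro rfl
      refine hE ⟨hu, hw, k, hk, cone, see, fun y hy _ hyc hys hsub => ?_⟩
      rw [F.proj_le]
      exact hmin y ⟨hy, hyc, hys, hsub⟩
    have hcr := H.cr_ne hs hu h0.mem hw (C.ne h0.cone).symm hne (C.ne cone).symm
    rcases hcr.lt_or_gt with hcr | hcr
    · have C' : Ctx P S (-s) j i k u w := by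
        refine ⟨H, F.swap, neg_ne_zero.mpr hs, fun a b c => ?_, hu, hw, see, cone⟩
        rw [cr_neg, hF]; ring
      have h := claim_left C' (by rwa [add_comm]) h0 (fun z hz => by
        have := hmin z hz; linarith) (by rw [cr_neg]; linarith)
      refine ⟨h.1.mono ?_, fun hR => ?_⟩
      · rcases le_total (tri i (w - u)) (tri j (w - u)) with h1 | h1
        · rw [max_eq_left (by linarith), max_eq_right (by linarith)]; linarith
        · rw [max_eq_right (by linarith), max_eq_left (by linarith)]; linarith
      · exfalso
        rw [hF] at hcr
        have h1 := hR v₀ h0.mem h0.cone h0.see h0.sub (by linarith)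
        have h2 := hmin w C.self
        refine H.tri_ne k h0.mem hw hne ?_
        rw [F.sum]; simp only [tri_sub] at h1 h2 ⊢; linarith
    · exact claim_left C G h0 hmin hcr

theorem stretch_two {a b : ℝ} :
    2 * a + b + max 0 (b - a) ≤ 2 * √(a ^ 2 + a * b + b ^ 2) := by
  have h1 : (2 * a + b) / 2 ≤ √(a ^ 2 + a * b + b ^ 2) := by
    apply Real.le_sqrt_of_sq_le; nlinarith [sq_nonneg b]
  have h2 : (a + 2 * b) / 2 ≤ √(a ^ 2 + a * b + b ^ 2) := by
    apply Real.le_sqrt_of_sq_le; nlinarith [sq_nonneg a]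
  rcases max_choice 0 (b - a) with h | h <;> rw [h] <;> linarith

/-- Each of two points of `P` lies in a positive cone of the other, up to exchanging them. -/
theorem exists_cone (H : Setting P S) (hu : u ∈ P) (hw : w ∈ P) (h : u ≠ w) :
    ∃ k < 3, inPos k u w ∨ inPos k w u := by
  have h0 := H.tri_ne 0 hu hw h
  have h1 := H.tri_ne 1 hu hw h
  have h2 := H.tri_ne 2 hu hw h
  have hsum := Fr.a.sum (w - u)
  have r : ∀ m, tri m (w - u) < 0 → 0 < tri m (u - w) := fun m h => by
    rw [tri_rev]; linarith
  rcases h0.lt_or_gt with h0 | h0 <;> rcases h1.lt_or_gt with h1 | h1 <;>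
    rcases h2.lt_or_gt with h2 | h2
  · linarith
  · exact ⟨2, by norm_num, .inr ((Fr.e.inPos_iff _ _).mpr ⟨r _ h0, r _ h1⟩)⟩
  · exact ⟨1, by norm_num, .inr ((Fr.c.inPos_iff _ _).mpr ⟨r _ h2, r _ h0⟩)⟩
  · exact ⟨0, by norm_num, .inl ((Fr.a.inPos_iff _ _).mpr ⟨h1, h2⟩)⟩
  · exact ⟨0, by norm_num, .inr ((Fr.a.inPos_iff _ _).mpr ⟨r _ h1, r _ h2⟩)⟩
  · exact ⟨1, by norm_num, .inl ((Fr.c.inPos_iff _ _).mpr ⟨h2, h0⟩)⟩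
  · exact ⟨2, by norm_num, .inl ((Fr.e.inPos_iff _ _).mpr ⟨h0, h1⟩)⟩
  · linarith

theorem H_two_spanner (H : Setting P S) (hu : u ∈ P) (hw : w ∈ P) (h : u ≠ w)
    (see : CanSee S u w) : Conn (HEdge P S) u w (2 * dst u w) := by
  have key : ∀ {u w}, u ∈ P → w ∈ P → CanSee S u w → ∀ {k}, k < 3 → inPos k u w →
      Conn (HEdge P S) u w (2 * dst u w) := by
    intro u w hu hw see k hk hc
    obtain ⟨i, j, F, -⟩ := Fr.exists_pos hk
    refine (H_bounds H (k, u, w) ⟨hk, hu, hw⟩ i j F see hc).1.mono ?_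
    rw [F.dst_eq]
    exact stretch_two
  obtain ⟨k, hk, hc | hc⟩ := exists_cone H hu hw h
  · exact key hu hw see hk hc
  · rw [dst_comm]
    exact HEdge.conn_symm (key hw hu see.symm hk hc)

end CHT6

namespace CHT6

/-- **Theorem 3.** For every edge `uw` of the constrained half-theta6-graph with `w` in a
negative cone of `u`, the graph `G₉` contains a path from `u` to `w` of length at most
`3·|uw|`. Consequently `G₉` is a 3-spanner of the constrained half-theta6-graph and a
6-spanner of the visibility graph. -/
theorem stmt_15 (P : Set Pt) (S : Set (Pt × Pt)) (hPfin : P.Finite)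
    (hSP : ∀ c ∈ S, c.1 ∈ P ∧ c.2 ∈ P)
    (hSnc : ∀ c ∈ S, ∀ d ∈ S, c ≠ d → ¬ PCross c.1 c.2 d.1 d.2)
    (hGP : GenPos P) :
    (∀ u w : Pt, HEdge P S u w → (∃ i < 3, inNeg i u w) →
      ∃ (n : ℕ) (f : Fin (n + 1) → Pt),
        IsPath (G9Edge P S) f ∧ f 0 = u ∧ f (Fin.last n) = w ∧
        pathLen f ≤ 3 * dst u w) ∧
    (∀ (n : ℕ) (f : Fin (n + 1) → Pt), IsPath (HEdge P S) f →
      ∃ (m : ℕ) (g : Fin (m + 1) → Pt),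
        IsPath (G9Edge P S) g ∧ g 0 = f 0 ∧ g (Fin.last m) = f (Fin.last n) ∧
        pathLen g ≤ 3 * pathLen f) ∧
    (∀ u ∈ P, ∀ w ∈ P, u ≠ w → CanSee S u w →
      ∃ (m : ℕ) (g : Fin (m + 1) → Pt),
        IsPath (G9Edge P S) g ∧ g 0 = u ∧ g (Fin.last m) = w ∧
        pathLen g ≤ 6 * dst u w) := by
  have H : Setting P S := ⟨hPfin, hSP, hSnc, hGP⟩
  have h3 : ∀ a b, HEdge P S a b → Conn (G9Edge P S) a b (3 * dst a b) := fun a b h =>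
    G9_stretch H h
  refine ⟨fun u w h _ => (h3 u w h).toPath, fun n f hf => (Conn.ofPath h3 n f hf).toPath,
    fun u hu w hw hne see => ?_⟩
  obtain ⟨n, f, hf, h0, hl, hlen⟩ := (H_two_spanner H hu hw hne see).toPath
  have h := Conn.ofPath h3 n f hf
  rw [h0, hl] at h
  exact (h.mono (by linarith)).toPath

end CHT6
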